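/- arXiv:2207.09972 — 6 statements merged into one kernel-verified Lean document; each statement's English description precedes it below -/
import Mathlib

section
/- For every n ≥ 2 and all 1 ≤ p < q ≤ n, the boundary set ∂_{p,q} (the set of triangulations in the oriented class Θ_{T_p} having a neighbor in Θ_{T_q}) induces a subgraph of K_n isomorphic to the Cartesian product K_{p−1} □ K_{q−p−1} □ K_{n−q}; in particular each such boundary induces a product K_i □ K_j □ K_k with i + j + k = n − 2. The symmetric statement holds for ∂_{q,p} ⊆ Θ_{T_q}. -/
open Finset

/-- `x` lies strictly between `a` and `b` in cyclic (counterclockwise) order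
on the vertices `0, 1, …, m-1` of a convex `m`-gon. -/
def CycBtw {m : ℕ} (a b x : Fin m) : Prop :=
  0 < (x - a).val ∧ (x - a).val < (b - a).val

/-- `a` and `b` are adjacent (cyclically consecutive) vertices of the convex `m`-gon. -/
def PolyAdj {m : ℕ} (a b : Fin m) : Prop :=
  (b - a).val = 1 ∨ (a - b).val = 1

/-- `e` is a side of the convex `m`-gon. -/
def IsSide {m : ℕ} (e : Sym2 (Fin m)) : Prop :=
  ∃ a b : Fin m, e = s(a, b) ∧ PolyAdj a b

/-- `e` is a diagonal of the convex `m`-gon: a pair of distinct non-adjacent vertices. -/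
def IsDiagonal {m : ℕ} (e : Sym2 (Fin m)) : Prop :=
  ¬ e.IsDiag ∧ ∀ a b : Fin m, e = s(a, b) → ¬ PolyAdj a b

/-- Two chords cross iff exactly one endpoint of one lies strictly between the
endpoints of the other (for every representation of the endpoints). -/
def Crosses {m : ℕ} (e f : Sym2 (Fin m)) : Prop :=
  ∀ a b : Fin m, e = s(a, b) →
    ∃ c d : Fin m, f = s(c, d) ∧ Xor' (CycBtw a b c) (CycBtw a b d)

/-- A triangulation of the convex `(n+2)`-gon: a maximal set of pairwise
non-crossing diagonals. -/
def IsTriangulation (n : ℕ) (t : Finset (Sym2 (Fin (n + 2)))) : Prop :=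
  (∀ e ∈ t, IsDiagonal e) ∧
  (∀ e ∈ t, ∀ f ∈ t, ¬ Crosses e f) ∧
  (∀ e, IsDiagonal e → (∀ f ∈ t, ¬ Crosses e f) → e ∈ t)

/-- The type of triangulations of the convex `(n+2)`-gon. -/
def Triangulation (n : ℕ) : Type :=
  {t : Finset (Sym2 (Fin (n + 2))) // IsTriangulation n t}

instance (n : ℕ) : DecidableEq (Triangulation n) := fun a b =>
  decidable_of_iff (a.val = b.val) Subtype.ext_iff.symm

noncomputable instance (n : ℕ) : Fintype (Triangulation n) := by
  classical exact Subtype.fintype _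

/-- The associahedron graph `K_n`: vertices are the triangulations of the convex
`(n+2)`-gon, with an edge between two triangulations iff they differ in exactly
one diagonal (a flip). -/
def assocGraph (n : ℕ) : SimpleGraph (Triangulation n) where
  Adj s t := (s.val \ t.val).card = 1 ∧ (t.val \ s.val).card = 1
  symm := ⟨fun s t h => ⟨h.2, h.1⟩⟩
  loopless := ⟨fun s h => by simp at h⟩

/-- The set of edges of `G` with exactly one endpoint in `S`. -/
def edgeBoundary {V : Type*} (G : SimpleGraph V) (S : Set V) : Set (Sym2 V) :=
  {e | e ∈ G.edgeSet ∧ ∃ u v : V, e = s(u, v) ∧ u ∈ S ∧ v ∉ S}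

/-- `e` is an edge of the triangulation `t`: a side of the polygon or one of the
diagonals of `t`. -/
def EdgeOfT {n : ℕ} (t : Triangulation n) (e : Sym2 (Fin (n + 2))) : Prop :=
  IsSide e ∨ e ∈ t.val

/-- The triangle with vertices `a`, `b`, `c` is one of the `n` triangles of the
triangulation `t` (for pairwise non-crossing sets of diagonals this holds exactly
when all three chords are edges of `t`). -/
def IsTriangleOf {n : ℕ} (t : Triangulation n) (a b c : Fin (n + 2)) : Prop :=
  a ≠ b ∧ b ≠ c ∧ a ≠ c ∧ EdgeOfT t s(a, b) ∧ EdgeOfT t s(b, c) ∧ EdgeOfT t s(a, c)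

open Fin.NatCast in
/-- The oriented class `Θ_{T_p}` (w.r.t. the special side `e* = {0, n+1}`): the set of
triangulations of the convex `(n+2)`-gon having the triangle `T_p = {0, p, n+1}` as one of
their triangles. -/
def orientedClass (n p : ℕ) : Set (Triangulation n) :=
  {t | IsTriangleOf t (0 : Fin (n + 2)) ((p : ℕ) : Fin (n + 2)) (((n + 1 : ℕ)) : Fin (n + 2))}

/-- The set `E_{p,q}` of edges of `K_n` with one endpoint in `Θ_{T_p}` and the other
in `Θ_{T_q}`. -/
def edgesBetween (n p q : ℕ) : Set (Sym2 (Triangulation n)) :=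
  {e | e ∈ (assocGraph n).edgeSet ∧
    ∃ u v : Triangulation n, e = s(u, v) ∧ u ∈ orientedClass n p ∧ v ∈ orientedClass n q}

/-- The boundary set `∂_{p,q}`: triangulations in `Θ_{T_p}` having a neighbor in
`Θ_{T_q}`. -/
def boundarySet (n p q : ℕ) : Set (Triangulation n) :=
  {t | t ∈ orientedClass n p ∧
    ∃ t' : Triangulation n, t' ∈ orientedClass n q ∧ (assocGraph n).Adj t t'}

/-!
In the simplicial complex of sets of pairwise non-crossing diagonals, whose facets are the
triangulations, the facets containing a given face are the facets of its link. Suppose that `S`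
contains the triangle `{0, p, n + 1}`, that `T` contains `{0, q, n + 1}` and that they differ by a
flip. The diagonals `{p, n + 1}` of `S` and `{0, q}` of `T` cross, so they are the two exchanged by
the flip, and maximality forces the remaining side `{p, q}` of the quadrilateral
`{0, p, q, n + 1}` into both: a diagonal crossing `{p, q}` would cross one of the two. Conversely,
the diagonal of a quadrilateral can always be flipped. Hence `∂_{p,q}` consists of the
triangulations that contain this quadrilateral split along `{p, n + 1}`, and `∂_{q,p}` of those in
which it is split along `{0, q}`. In both cases the link is the join of the complexes of the three
polygons cut off by `{0, p}`, `{p, q}` and `{q, n + 1}`, and a flip in a join changes exactly one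
component, so the flip graph is a Cartesian product.
-/

/-- A Cartesian product of graph isomorphisms. -/
def boxProdCongr {V V' W W' : Type*} {G : SimpleGraph V} {G' : SimpleGraph V'} {H : SimpleGraph W}
    {H' : SimpleGraph W'} (φ : G ≃g G') (ψ : H ≃g H') : G.boxProd H ≃g G'.boxProd H' where
  toEquiv := φ.toEquiv.prodCongr ψ.toEquiv
  map_rel_iff' := by
    simp [SimpleGraph.boxProd_adj, SimpleGraph.Iso.map_adj_iff]

section FlagComplex

variable {α β : Type*} {r : α → α → Prop} {s : β → β → Prop} {D D₁ D₂ : Set α}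
  {F S S₁ S₂ T T₁ T₂ : Finset α} {d d' e : α}

/-- `T` is a facet of the flag complex on `D` in which two vertices are incompatible when related
by `r`: a maximal set of elements of `D` no two of which are `r`-related. Triangulations are the
facets for the crossing relation on the set of diagonals. -/
def IsFacet (r : α → α → Prop) (D : Set α) (T : Finset α) : Prop :=
  (∀ e ∈ T, e ∈ D) ∧ (∀ e ∈ T, ∀ f ∈ T, ¬ r e f) ∧ (∀ e, e ∈ D → (∀ f ∈ T, ¬ r e f) → e ∈ T)

/-- The flip graph of the flag complex of `r` on `D`: its vertices are the facets, and two facets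
are adjacent when each is obtained from the other by exchanging a single element. -/
def flipGraph [DecidableEq α] (r : α → α → Prop) (D : Set α) :
    SimpleGraph {T : Finset α // IsFacet r D T} where
  Adj S T := #(S.1 \ T.1) = 1 ∧ #(T.1 \ S.1) = 1
  symm := ⟨fun _ _ h => ⟨h.2, h.1⟩⟩
  loopless := ⟨fun S h => by simp at h⟩

/-- The vertex set of the link of the face `F` in the flag complex of `r` on `D`. -/
def flagLink (r : α → α → Prop) (D : Set α) (F : Finset α) : Set α :=
  {e | e ∈ D ∧ e ∉ F ∧ ∀ f ∈ F, ¬ r e f}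

theorem IsFacet.eq_of_subset (hS : IsFacet r D S) (hT : IsFacet r D T) (h : S ⊆ T) : S = T :=
  h.antisymm fun e he => hS.2.2 e (hT.1 e he) fun f hf => hT.2.1 e he f (h hf)

theorem IsFacet.card_sdiff_eq_zero_iff [DecidableEq α] (hS : IsFacet r D S) (hT : IsFacet r D T) :
    #(S \ T) = 0 ↔ S = T := by
  rw [card_eq_zero, sdiff_eq_empty_iff_subset]
  exact ⟨hS.eq_of_subset hT, fun h => h.subset⟩

section Map

theorem isFacet_map_iff (φ : r ↪r s) :
    IsFacet s (φ '' D) (T.map φ.toEmbedding) ↔ IsFacet r D T := by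
  simp [IsFacet, φ.map_rel_iff]

theorem IsFacet.exists_eq_map (φ : r ↪r s) {U : Finset β} (hU : IsFacet s (φ '' D) U) :
    ∃ T, IsFacet r D T ∧ T.map φ.toEmbedding = U := by
  classical
  obtain ⟨T, -, rfl⟩ := subset_set_image_iff.1 (show (U : Set β) ⊆ φ '' D from hU.1)
  have hmap : T.map φ.toEmbedding = T.image φ := map_eq_image _ _
  exact ⟨T, (isFacet_map_iff φ).1 (hmap ▸ hU), hmap⟩

/-- Relabelling the ground set along an embedding of relations. -/
noncomputable def flipGraphMap [DecidableEq α] [DecidableEq β] (φ : r ↪r s) {D' : Set β}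
    (hD : φ '' D = D') : flipGraph r D ≃g flipGraph s D' where
  toEquiv := Equiv.ofBijective
    (fun T => ⟨T.1.map φ.toEmbedding, hD ▸ (isFacet_map_iff φ).2 T.2⟩)
    ⟨fun _ _ h => Subtype.ext (map_injective _ (Subtype.ext_iff.1 h)), fun U =>
      let ⟨T, hT, hTU⟩ := IsFacet.exists_eq_map φ (hD.symm ▸ U.2)
      ⟨⟨T, hT⟩, Subtype.ext hTU⟩⟩
  map_rel_iff' {S T} := by
    change #(S.1.map _ \ T.1.map _) = 1 ∧ #(T.1.map _ \ S.1.map _) = 1 ↔ _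
    simp only [flipGraph, ← Finset.map_sdiff, card_map]

end Map

section Join

theorem IsFacet.union [DecidableEq α] [Std.Symm r] (hT₁ : IsFacet r D₁ T₁)
    (hT₂ : IsFacet r D₂ T₂) (h₁₂ : ∀ e ∈ D₁, ∀ f ∈ D₂, ¬ r e f) :
    IsFacet r (D₁ ∪ D₂) (T₁ ∪ T₂) := by
  refine ⟨fun e he => ?_, fun e he f hf => ?_, fun e he hcompat => ?_⟩
  · exact (mem_union.1 he).imp (hT₁.1 e) (hT₂.1 e)
  · rcases mem_union.1 he with he | he <;> rcases mem_union.1 hf with hf | hf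
    · exact hT₁.2.1 e he f hf
    · exact h₁₂ e (hT₁.1 e he) f (hT₂.1 f hf)
    · exact fun hef => h₁₂ f (hT₁.1 f hf) e (hT₂.1 e he) (symm_of r hef)
    · exact hT₂.2.1 e he f hf
  · rcases he with he | he
    · exact mem_union_left _ (hT₁.2.2 e he fun f hf => hcompat f (mem_union_left _ hf))
    · exact mem_union_right _ (hT₂.2.2 e he fun f hf => hcompat f (mem_union_right _ hf))

open scoped Classical in
theorem IsFacet.filter_left (hT : IsFacet r (D₁ ∪ D₂) T) (h₁₂ : ∀ e ∈ D₁, ∀ f ∈ D₂, ¬ r e f) :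
    IsFacet r D₁ (T.filter (· ∈ D₁)) := by
  refine ⟨fun e he => (mem_filter.1 he).2,
    fun e he f hf => hT.2.1 e (mem_of_mem_filter e he) f (mem_of_mem_filter f hf),
    fun e he hcompat => mem_filter.2 ⟨hT.2.2 e (Or.inl he) fun f hf => ?_, he⟩⟩
  rcases hT.1 f hf with hf₁ | hf₂
  · exact hcompat f (mem_filter.2 ⟨hf, hf₁⟩)
  · exact h₁₂ e he f hf₂

open scoped Classical in
theorem IsFacet.filter_right [Std.Symm r] (hT : IsFacet r (D₁ ∪ D₂) T)
    (h₁₂ : ∀ e ∈ D₁, ∀ f ∈ D₂, ¬ r e f) : IsFacet r D₂ (T.filter (· ∈ D₂)) :=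
  IsFacet.filter_left (Set.union_comm D₁ D₂ ▸ hT) fun e he f hf hef => h₁₂ f hf e he (symm_of r hef)

theorem IsFacet.disjoint (hT₁ : IsFacet r D₁ T₁) (hT₂ : IsFacet r D₂ T₂)
    (hD : Disjoint D₁ D₂) : Disjoint T₁ T₂ :=
  disjoint_coe.1 (hD.mono hT₁.1 hT₂.1)

theorem card_union_sdiff_union [DecidableEq α] (hS : Disjoint S₁ S₂) (h₁₂ : Disjoint S₁ T₂)
    (h₂₁ : Disjoint S₂ T₁) : #((S₁ ∪ S₂) \ (T₁ ∪ T₂)) = #(S₁ \ T₁) + #(S₂ \ T₂) := by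
  have hsdiff : (S₁ ∪ S₂) \ (T₁ ∪ T₂) = S₁ \ T₁ ∪ S₂ \ T₂ := by
    rw [union_sdiff_distrib, sdiff_union_distrib, sdiff_union_distrib,
      sdiff_eq_self_of_disjoint h₁₂, sdiff_eq_self_of_disjoint h₂₁,
      inter_eq_left.2 sdiff_subset, inter_eq_right.2 sdiff_subset]
  rw [hsdiff, card_union_of_disjoint (hS.mono sdiff_subset sdiff_subset)]

open scoped Classical in
/-- Facets of a join are pairs of facets, and a flip changes exactly one component. -/
noncomputable def flipGraphJoin [DecidableEq α] [Std.Symm r] (hD : Disjoint D₁ D₂)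
    (h₁₂ : ∀ e ∈ D₁, ∀ f ∈ D₂, ¬ r e f) :
    (flipGraph r D₁).boxProd (flipGraph r D₂) ≃g flipGraph r (D₁ ∪ D₂) where
  toFun T := ⟨T.1.1 ∪ T.2.1, T.1.2.union T.2.2 h₁₂⟩
  invFun T := (⟨T.1.filter (· ∈ D₁), T.2.filter_left h₁₂⟩,
    ⟨T.1.filter (· ∈ D₂), T.2.filter_right h₁₂⟩)
  left_inv := by
    rintro ⟨⟨T₁, hT₁⟩, ⟨T₂, hT₂⟩⟩
    have hnot₁ : ∀ e ∈ T₂, e ∉ D₁ := fun e he h => Set.disjoint_left.1 hD h (hT₂.1 e he)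
    have hnot₂ : ∀ e ∈ T₁, e ∉ D₂ := fun e he h => Set.disjoint_left.1 hD (hT₁.1 e he) h
    simp only [filter_union, filter_true_of_mem hT₁.1, filter_true_of_mem hT₂.1,
      filter_false_of_mem hnot₁, filter_false_of_mem hnot₂, union_empty, empty_union]
  right_inv T := by
    refine Subtype.ext ?_
    simp only
    rw [← filter_or]
    exact filter_true_of_mem T.2.1
  map_rel_iff' := by
    rintro ⟨⟨S₁, hS₁⟩, ⟨S₂, hS₂⟩⟩ ⟨⟨T₁, hT₁⟩, ⟨T₂, hT₂⟩⟩
    have hST := card_union_sdiff_union (hS₁.disjoint hS₂ hD) (hS₁.disjoint hT₂ hD)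
      (hT₁.disjoint hS₂ hD).symm
    have hTS := card_union_sdiff_union (hT₁.disjoint hT₂ hD) (hT₁.disjoint hS₂ hD)
      (hS₁.disjoint hT₂ hD).symm
    have h₁ := hS₁.card_sdiff_eq_zero_iff hT₁
    have h₂ := hS₂.card_sdiff_eq_zero_iff hT₂
    have h₁' := hT₁.card_sdiff_eq_zero_iff hS₁
    have h₂' := hT₂.card_sdiff_eq_zero_iff hS₂
    simp only [flipGraph, SimpleGraph.boxProd_adj, Equiv.coe_fn_mk, Subtype.mk.injEq]
    grind

end Join

section Link

theorem IsFacet.sdiff [DecidableEq α] (hT : IsFacet r D T) (hF : F ⊆ T) :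
    IsFacet r (flagLink r D F) (T \ F) := by
  refine ⟨fun e he => ?_, fun e he f hf => ?_, fun e he hcompat => ?_⟩
  · obtain ⟨heT, heF⟩ := mem_sdiff.1 he
    exact ⟨hT.1 e heT, heF, fun f hf => hT.2.1 e heT f (hF hf)⟩
  · exact hT.2.1 e (mem_sdiff.1 he).1 f (mem_sdiff.1 hf).1
  · refine mem_sdiff.2 ⟨hT.2.2 e he.1 fun f hf => ?_, he.2.1⟩
    by_cases hfF : f ∈ F
    · exact he.2.2 f hfF
    · exact hcompat f (mem_sdiff.2 ⟨hf, hfF⟩)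

theorem IsFacet.union_of_flagLink [DecidableEq α] [Std.Symm r] (hFD : ∀ e ∈ F, e ∈ D)
    (hF : ∀ e ∈ F, ∀ f ∈ F, ¬ r e f) (hT : IsFacet r (flagLink r D F) T) :
    IsFacet r D (T ∪ F) := by
  refine ⟨fun e he => ?_, fun e he f hf => ?_, fun e he hcompat => ?_⟩
  · exact (mem_union.1 he).elim (fun he => (hT.1 e he).1) (hFD e)
  · rcases mem_union.1 he with he | he <;> rcases mem_union.1 hf with hf | hf
    · exact hT.2.1 e he f hf
    · exact (hT.1 e he).2.2 f hf
    · exact fun hef => (hT.1 f hf).2.2 e he (symm_of r hef)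
    · exact hF e he f hf
  · by_cases heF : e ∈ F
    · exact mem_union_right _ heF
    · exact mem_union_left _ (hT.2.2 e
        ⟨he, heF, fun f hf => hcompat f (mem_union_right _ hf)⟩
        fun f hf => hcompat f (mem_union_left _ hf))

theorem IsFacet.disjoint_of_flagLink (hT : IsFacet r (flagLink r D F) T) : Disjoint T F :=
  disjoint_left.2 fun e he => (hT.1 e he).2.1

/-- The facets containing a face `F` are the facets of the link of `F`. -/
def flipGraphLink [DecidableEq α] [Std.Symm r] (hFD : ∀ e ∈ F, e ∈ D)
    (hF : ∀ e ∈ F, ∀ f ∈ F, ¬ r e f) :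
    (flipGraph r D).induce {T | F ⊆ T.1} ≃g flipGraph r (flagLink r D F) where
  toFun T := ⟨T.1.1 \ F, T.1.2.sdiff T.2⟩
  invFun T := ⟨⟨T.1 ∪ F, T.2.union_of_flagLink hFD hF⟩, subset_union_right⟩
  left_inv T := Subtype.ext (Subtype.ext (sdiff_union_of_subset T.2))
  right_inv T := Subtype.ext (union_sdiff_cancel_right T.2.disjoint_of_flagLink)
  map_rel_iff' {S T} := by
    have hS : F ⊆ S.1.1 := S.2
    have hT : F ⊆ T.1.1 := T.2
    simp only [flipGraph, Equiv.coe_fn_mk, SimpleGraph.comap_adj,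
      Function.Embedding.subtype_apply, SimpleGraph.induce,
      sdiff_sdiff_sdiff_cancel_right hS, sdiff_sdiff_sdiff_cancel_right hT]

end Link

section Flip

variable [DecidableEq α] {S T : {T : Finset α // IsFacet r D T}}

theorem mem_of_flipGraph_adj (h : (flipGraph r D).Adj S T) (hdS : d ∈ S.1) (hdT : d ∉ T.1)
    (he : e ∈ S.1) (hne : e ≠ d) : e ∈ T.1 := by
  by_contra heT
  exact hne (card_le_one.1 h.1.le e (mem_sdiff.2 ⟨he, heT⟩) d (mem_sdiff.2 ⟨hdS, hdT⟩))

theorem mem_of_flipGraph_adj_of_forall (h : (flipGraph r D).Adj S T) (hdS : d ∈ S.1)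
    (hdT : d ∉ T.1) (hd' : d' ∈ T.1) (heD : e ∈ D) (hed : ¬ r e d)
    (he : ∀ f ∈ D, r e f → r f d ∨ r f d') : e ∈ S.1 := by
  refine S.2.2.2 e heD fun f hf hef => ?_
  have hfd : f ≠ d := fun hfd => hed (hfd ▸ hef)
  rcases he f (S.2.1 f hf) hef with hr | hr
  · exact S.2.2.1 f hf d hdS hr
  · exact T.2.2.1 f (mem_of_flipGraph_adj h hdS hdT hf hfd) d' hd' hr

theorem exists_flipGraph_adj [Std.Symm r] (hFD : ∀ e ∈ insert d' F, e ∈ D)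
    (hF : ∀ e ∈ insert d' F, ∀ f ∈ insert d' F, ¬ r e f) (hdd' : r d d')
    (hlink : flagLink r D (insert d F) = flagLink r D (insert d' F))
    (hS : insert d F ⊆ S.1) : ∃ T, insert d' F ⊆ T.1 ∧ (flipGraph r D).Adj S T := by
  have hT : IsFacet r D (S.1 \ insert d F ∪ insert d' F) :=
    (hlink ▸ S.2.sdiff hS).union_of_flagLink hFD hF
  have hdS : d ∈ S.1 := hS (mem_insert_self d F)
  have hd'S : d' ∉ S.1 := fun h => S.2.2.1 d hdS d' h hdd'
  have hdT : d ∉ S.1 \ insert d F ∪ insert d' F := fun h =>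
    hT.2.1 d h d' (mem_union_right _ (mem_insert_self d' F)) hdd'
  refine ⟨⟨_, hT⟩, subset_union_right, card_eq_one.2 ⟨d, ?_⟩, card_eq_one.2 ⟨d', ?_⟩⟩ <;> grind

end Flip

end FlagComplex

theorem isSide_mk_iff {m : ℕ} {x y : Fin m} : IsSide s(x, y) ↔ PolyAdj x y := by
  simp only [IsSide, Sym2.eq_iff, PolyAdj]
  grind

theorem isDiagonal_mk_iff {m : ℕ} {x y : Fin m} : IsDiagonal s(x, y) ↔ x ≠ y ∧ ¬ PolyAdj x y := by
  simp only [IsDiagonal, Sym2.mk_isDiag_iff, Sym2.eq_iff, PolyAdj]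
  grind

theorem crosses_mk_iff {m : ℕ} {x y z w : Fin m} : Crosses s(x, y) s(z, w) ↔
    Xor (CycBtw x y z) (CycBtw x y w) ∧ Xor (CycBtw y x z) (CycBtw y x w) := by
  have exists_mk_eq_iff (P : Fin m → Prop) :
      (∃ c d, s(z, w) = s(c, d) ∧ Xor (P c) (P d)) ↔ Xor (P z) (P w) := by
    simp only [Sym2.eq_iff]
    grind [Xor]
  constructor
  · intro h
    exact ⟨(exists_mk_eq_iff _).1 (h x y rfl), (exists_mk_eq_iff _).1 (h y x Sym2.eq_swap)⟩
  · rintro ⟨hxy, hyx⟩ a b hab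
    rcases Sym2.eq_iff.1 hab with ⟨rfl, rfl⟩ | ⟨rfl, rfl⟩
    · exact (exists_mk_eq_iff _).2 hxy
    · exact (exists_mk_eq_iff _).2 hyx

theorem polyAdj_iff_of_le {n : ℕ} {x y : Fin (n + 2)} (h : x ≤ y) :
    PolyAdj x y ↔ y.val = x.val + 1 ∨ x.val = 0 ∧ y.val = n + 1 := by
  have hxy := Fin.intCast_val_sub_eq_sub_add_ite x y
  have hyx := Fin.intCast_val_sub_eq_sub_add_ite y x
  simp only [PolyAdj]
  grind

theorem cycBtw_iff_of_le {m : ℕ} {x y u : Fin m} (h : x ≤ y) : CycBtw x y u ↔ x < u ∧ u < y := by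
  have hux := Fin.intCast_val_sub_eq_sub_add_ite u x
  have hyx := Fin.intCast_val_sub_eq_sub_add_ite y x
  simp only [CycBtw]
  grind

theorem cycBtw_iff_of_lt {m : ℕ} {x y u : Fin m} (h : y < x) : CycBtw x y u ↔ x < u ∨ u < y := by
  have hux := Fin.intCast_val_sub_eq_sub_add_ite u x
  have hyx := Fin.intCast_val_sub_eq_sub_add_ite y x
  simp only [CycBtw]
  grind

/-- Crossing of chords of a convex polygon with vertices in `ℕ`, the chord joining `x ≤ y` being
encoded as `(x, y)`. -/
def Interleave (e f : ℕ × ℕ) : Prop :=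
  (e.1 < f.1 ∧ f.1 < e.2 ∧ e.2 < f.2) ∨ (f.1 < e.1 ∧ e.1 < f.2 ∧ f.2 < e.2)

instance : Std.Symm Interleave := ⟨fun _ _ => Or.symm⟩

/-- The diagonals of the convex polygon with vertices `a, a + 1, …, b`, the one joining `x < y`
being encoded as `(x, y)`. -/
def polygonDiagonals (a b : ℕ) : Set (ℕ × ℕ) :=
  {e | a ≤ e.1 ∧ e.1 + 2 ≤ e.2 ∧ e.2 ≤ b ∧ (a < e.1 ∨ e.2 < b)}

theorem exists_le_mk_eq {α : Type*} [LinearOrder α] (e : Sym2 α) :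
    ∃ x y, x ≤ y ∧ s(x, y) = e := by
  induction e with | h x y
  rcases le_total x y with h | h
  · exact ⟨x, y, h, rfl⟩
  · exact ⟨y, x, h, Sym2.eq_swap⟩

theorem crosses_iff_interleave {m : ℕ} (e f : Sym2 (Fin m)) :
    Crosses e f ↔ Interleave (e.inf, e.sup) (f.inf, f.sup) := by
  obtain ⟨x, y, hxy, rfl⟩ := exists_le_mk_eq e
  obtain ⟨z, w, hzw, rfl⟩ := exists_le_mk_eq f
  rw [crosses_mk_iff]
  simp only [Sym2.inf_mk, Sym2.sup_mk, inf_eq_left.2 hxy, inf_eq_left.2 hzw, sup_eq_right.2 hxy,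
    sup_eq_right.2 hzw, Interleave, cycBtw_iff_of_le hxy, xor_def]
  rcases hxy.eq_or_lt with rfl | hlt
  · simp only [cycBtw_iff_of_le le_rfl]
    omega
  · simp only [cycBtw_iff_of_lt hlt]
    omega

/-- Translating the vertices of a polygon by `a`. -/
def chordEmbedding (m a : ℕ) : (Crosses : Sym2 (Fin m) → _ → Prop) ↪r Interleave where
  toFun e := (a + e.inf, a + e.sup)
  inj' e f h := by
    obtain ⟨hinf, hsup⟩ := Prod.mk.inj h
    exact Sym2.inf_eq_inf_and_sup_eq_sup.1 ⟨Fin.ext (by omega), Fin.ext (by omega)⟩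
  map_rel_iff' {e f} := by
    change Interleave (a + e.inf, a + e.sup) (a + f.inf, a + f.sup) ↔ _
    simp only [crosses_iff_interleave, Interleave, add_lt_add_iff_left]

theorem chordEmbedding_mk {m a : ℕ} {x y : Fin m} (h : x ≤ y) :
    chordEmbedding m a s(x, y) = (a + x.val, a + y.val) := by
  change (a + (s(x, y).inf : ℕ), a + (s(x, y).sup : ℕ)) = _
  rw [Sym2.inf_mk, Sym2.sup_mk, inf_eq_left.2 h, sup_eq_right.2 h]

theorem isDiagonal_mk_iff_of_le {n a : ℕ} {x y : Fin (n + 2)} (h : x ≤ y) :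
    IsDiagonal s(x, y) ↔ (a + x.val, a + y.val) ∈ polygonDiagonals a (a + (n + 1)) := by
  simp only [isDiagonal_mk_iff, polyAdj_iff_of_le h, polygonDiagonals, Set.mem_ofPred_eq]
  omega

theorem image_isDiagonal_chordEmbedding (n a : ℕ) :
    chordEmbedding (n + 2) a '' {e | IsDiagonal e} = polygonDiagonals a (a + (n + 1)) := by
  ext ⟨i, j⟩
  constructor
  · rintro ⟨e, he, hij⟩
    obtain ⟨x, y, hxy, rfl⟩ := exists_le_mk_eq e
    rw [← hij, chordEmbedding_mk hxy]
    exact (isDiagonal_mk_iff_of_le hxy).1 he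
  · intro hij
    have hmem : a ≤ i ∧ i + 2 ≤ j ∧ j ≤ a + (n + 1) := ⟨hij.1, hij.2.1, hij.2.2.1⟩
    obtain ⟨x, rfl⟩ : ∃ x : Fin (n + 2), a + x.val = i :=
      ⟨⟨i - a, by omega⟩, Nat.add_sub_of_le hmem.1⟩
    obtain ⟨y, rfl⟩ : ∃ y : Fin (n + 2), a + y.val = j :=
      ⟨⟨j - a, by omega⟩, Nat.add_sub_of_le (by omega)⟩
    have hxy : x ≤ y := Fin.le_def.2 (by omega)
    exact ⟨s(x, y), (isDiagonal_mk_iff_of_le hxy).2 hij, chordEmbedding_mk hxy⟩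

/-- The associahedron graph as the flip graph of the polygon `a, a + 1, …, b`. -/
noncomputable def assocGraphIso {n a b : ℕ} (h : a + (n + 1) = b) :
    assocGraph n ≃g flipGraph Interleave (polygonDiagonals a b) :=
  flipGraphMap (D := {e | IsDiagonal e}) (chordEmbedding (n + 2) a)
    (h ▸ image_isDiagonal_chordEmbedding n a)

theorem coe_assocGraphIso {n a b : ℕ} (h : a + (n + 1) = b) (t : Triangulation n) :
    (assocGraphIso h t).1 = t.1.map (chordEmbedding (n + 2) a).toEmbedding :=
  rfl

instance (a b : ℕ) (e : ℕ × ℕ) : Decidable (e ∈ polygonDiagonals a b) :=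
  inferInstanceAs (Decidable (_ ∧ _))

/-- The sides of the triangle `a, v, u` that are diagonals of the polygon `a, a + 1, …, u`. -/
def triangleSides (a v u : ℕ) : Finset (ℕ × ℕ) :=
  filter (· ∈ polygonDiagonals a u) {(a, v), (v, u)}

/-- The sides of the quadrilateral `a, b, c, u` that are diagonals of the polygon
`a, a + 1, …, u`. -/
def quadSides (a b c u : ℕ) : Finset (ℕ × ℕ) :=
  filter (· ∈ polygonDiagonals a u) {(a, b), (b, c), (c, u)}

section Quadrilateral

variable {a b c u : ℕ} {d e f : ℕ × ℕ}

theorem not_interleave_of_mem_polygonDiagonals {a' b' : ℕ} (hbb' : b ≤ a')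
    (he : e ∈ polygonDiagonals a b) (hf : f ∈ polygonDiagonals a' b') : ¬ Interleave e f := by
  simp only [polygonDiagonals, Set.mem_ofPred_eq] at he hf
  simp only [Interleave]
  omega

theorem disjoint_polygonDiagonals {a' b' : ℕ} (hbb' : b ≤ a') :
    Disjoint (polygonDiagonals a b) (polygonDiagonals a' b') := by
  refine Set.disjoint_left.2 fun e he hf => ?_
  simp only [polygonDiagonals, Set.mem_ofPred_eq] at he hf
  omega

theorem mem_polygonDiagonals_of_mem_insert_quadSides (hab : a < b) (hbc : b < c) (hcu : c < u)
    (hd : d = (a, c) ∨ d = (b, u)) (he : e ∈ insert d (quadSides a b c u)) :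
    e ∈ polygonDiagonals a u := by
  rcases mem_insert.1 he with rfl | he
  · rcases hd with rfl | rfl <;> simp only [polygonDiagonals, Set.mem_ofPred_eq] <;> omega
  · exact (mem_filter.1 he).2

theorem not_interleave_of_mem_insert_quadSides (hbc : b < c) (hcu : c < u)
    (hd : d = (a, c) ∨ d = (b, u)) (he : e ∈ insert d (quadSides a b c u))
    (hf : f ∈ insert d (quadSides a b c u)) : ¬ Interleave e f := by
  simp only [quadSides, mem_insert, mem_filter, mem_singleton] at he hf
  simp only [Interleave]
  grind

theorem not_interleave_of_notMem_polygonDiagonals (hf₁ : a ≤ f.1) (hf₂ : f.2 ≤ u)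
    (he : e ∈ polygonDiagonals a u) (hf : f ∉ polygonDiagonals a u) : ¬ Interleave e f := by
  simp only [polygonDiagonals, Set.mem_ofPred_eq] at he hf
  simp only [Interleave]
  omega

theorem forall_quadSides_not_interleave_iff (hab : a < b) (hbc : b < c) (hcu : c < u)
    (he : e ∈ polygonDiagonals a u) :
    (∀ f ∈ quadSides a b c u, ¬ Interleave e f) ↔
      ¬ Interleave e (a, b) ∧ ¬ Interleave e (b, c) ∧ ¬ Interleave e (c, u) := by
  have not_interleave_iff {f : ℕ × ℕ} (hf₁ : a ≤ f.1) (hf₂ : f.2 ≤ u) :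
      (f ∈ polygonDiagonals a u → ¬ Interleave e f) ↔ ¬ Interleave e f :=
    ⟨fun h hef => not_interleave_of_notMem_polygonDiagonals hf₁ hf₂ he (fun hf => h hf hef) hef,
      fun h _ => h⟩
  simp only [quadSides, mem_filter, mem_insert, mem_singleton, and_imp, forall_eq_or_imp, forall_eq]
  rw [not_interleave_iff le_rfl (by omega), not_interleave_iff (by omega) (by omega),
    not_interleave_iff (by omega) le_rfl]

theorem mem_quadSides_iff (he : e ∈ polygonDiagonals a u) :
    e ∈ quadSides a b c u ↔ e = (a, b) ∨ e = (b, c) ∨ e = (c, u) := by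
  simp only [quadSides, mem_filter, mem_insert, mem_singleton, and_iff_left he]

theorem flagLink_insert_quadSides (hab : a < b) (hbc : b < c) (hcu : c < u)
    (hd : d = (a, c) ∨ d = (b, u)) :
    flagLink Interleave (polygonDiagonals a u) (insert d (quadSides a b c u)) =
      polygonDiagonals a b ∪ (polygonDiagonals b c ∪ polygonDiagonals c u) := by
  have hsub : polygonDiagonals a b ∪ (polygonDiagonals b c ∪ polygonDiagonals c u) ⊆
      polygonDiagonals a u := by
    rintro e (he | he | he) <;> simp only [polygonDiagonals, Set.mem_ofPred_eq] at he ⊢ <;> omega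
  ext ⟨i, j⟩
  refine (and_congr_right fun he => ?_).trans (and_iff_right_of_imp (@hsub (i, j)))
  simp only [mem_insert, forall_eq_or_imp, forall_quadSides_not_interleave_iff hab hbc hcu he,
    mem_quadSides_iff he]
  simp only [polygonDiagonals, Set.mem_ofPred_eq] at he
  constructor
  · rintro ⟨hne, hcompat⟩
    have harc : j ≤ b ∨ b ≤ i ∧ j ≤ c ∨ c ≤ i := by
      rcases hd with rfl | rfl <;> simp only [Interleave, Prod.mk.injEq] at hne hcompat <;> omega
    simp only [Prod.mk.injEq] at hne
    rcases harc with hjb | ⟨hbi, hjc⟩ | hci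
    · exact Or.inl ⟨he.1, he.2.1, hjb, by omega⟩
    · exact Or.inr (Or.inl ⟨hbi, he.2.1, hjc, by omega⟩)
    · exact Or.inr (Or.inr ⟨hci, he.2.1, he.2.2.1, by omega⟩)
  · intro harc
    simp only [polygonDiagonals, Set.mem_union, Set.mem_ofPred_eq] at harc
    rcases hd with rfl | rfl <;> simp only [Interleave, Prod.mk.injEq] <;>
      rcases harc with harc | harc | harc <;> refine ⟨?_, ?_, ?_, ?_⟩ <;> omega

theorem nonempty_flipGraph_induce_quad_iso (hab : a < b) (hbc : b < c) (hcu : c < u)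
    (hd : d = (a, c) ∨ d = (b, u)) :
    Nonempty ((flipGraph Interleave (polygonDiagonals a u)).induce
        {T | insert d (quadSides a b c u) ⊆ T.1} ≃g
      (flipGraph Interleave (polygonDiagonals a b)).boxProd
        ((flipGraph Interleave (polygonDiagonals b c)).boxProd
          (flipGraph Interleave (polygonDiagonals c u)))) := by
  have link := flipGraphLink
    (fun e => mem_polygonDiagonals_of_mem_insert_quadSides hab hbc hcu hd)
    (fun e he f => not_interleave_of_mem_insert_quadSides hbc hcu hd he)
  rw [flagLink_insert_quadSides hab hbc hcu hd] at link
  have join₁ := flipGraphJoin (r := Interleave)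
    (Set.disjoint_union_right.2 ⟨disjoint_polygonDiagonals (a := a) (b' := c) (le_refl b),
      disjoint_polygonDiagonals (b' := u) hbc.le⟩)
    fun e he f hf => hf.elim (not_interleave_of_mem_polygonDiagonals le_rfl he)
      (not_interleave_of_mem_polygonDiagonals hbc.le he)
  have join₂ := flipGraphJoin (disjoint_polygonDiagonals (a := b) (b' := u) (le_refl c))
    fun e he f => not_interleave_of_mem_polygonDiagonals le_rfl he
  exact ⟨(link.trans join₁.symm).trans (boxProdCongr .refl join₂.symm)⟩

theorem triangleSides_left_subset :
    triangleSides a b u ⊆ insert (b, u) (quadSides a b c u) := by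
  intro e he
  simp only [triangleSides, quadSides, mem_insert, mem_filter, mem_singleton] at he ⊢
  tauto

theorem triangleSides_right_subset :
    triangleSides a c u ⊆ insert (a, c) (quadSides a b c u) := by
  intro e he
  simp only [triangleSides, quadSides, mem_insert, mem_filter, mem_singleton] at he ⊢
  tauto

variable {S T : {T : Finset (ℕ × ℕ) // IsFacet Interleave (polygonDiagonals a u) T}}

theorem insert_quadSides_subset_of_adj (hab : a < b) (hbc : b < c) (hcu : c < u)
    (hS : triangleSides a b u ⊆ S.1) (hT : triangleSides a c u ⊆ T.1)
    (h : (flipGraph Interleave (polygonDiagonals a u)).Adj S T) :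
    insert (b, u) (quadSides a b c u) ⊆ S.1 ∧ insert (a, c) (quadSides a b c u) ⊆ T.1 := by
  have hbu : (b, u) ∈ polygonDiagonals a u := ⟨by omega, by omega, by omega, by omega⟩
  have hac : (a, c) ∈ polygonDiagonals a u := ⟨by omega, by omega, by omega, by omega⟩
  have hbuS : (b, u) ∈ S.1 := hS (by simp [triangleSides, hbu])
  have hacT : (a, c) ∈ T.1 := hT (by simp [triangleSides, hac])
  have hcross : Interleave (b, u) (a, c) := Or.inr ⟨hab, hbc, hcu⟩
  have hbuT : (b, u) ∉ T.1 := fun hbuT => T.2.2.1 _ hbuT _ hacT hcross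
  have hacS : (a, c) ∉ S.1 := fun hacS => S.2.2.1 _ hbuS _ hacS hcross
  have hQS : quadSides a b c u ⊆ S.1 := by
    intro e he
    have heD := (mem_filter.1 he).2
    rcases (mem_quadSides_iff heD).1 he with rfl | rfl | rfl
    · exact hS (by simp [triangleSides, heD])
    · -- A chord crossing the side `(b, c)` crosses one of the diagonals `(b, u)` and `(a, c)`.
      refine mem_of_flipGraph_adj_of_forall h hbuS hbuT hacT heD ?_ fun f hf hef => ?_
      · simp only [Interleave]
        omega
      · simp only [Interleave, polygonDiagonals, Set.mem_ofPred_eq] at hf hef ⊢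
        omega
    · exact mem_of_flipGraph_adj h.symm hacT hacS (hT (by simp [triangleSides, heD])) (by grind)
  refine ⟨insert_subset hbuS hQS, insert_subset hacT fun e he => ?_⟩
  refine mem_of_flipGraph_adj h hbuS hbuT (hQS he) ?_
  rintro rfl
  grind [quadSides]

theorem exists_adj_of_insert_quadSides_subset {d' : ℕ × ℕ} (hab : a < b) (hbc : b < c) (hcu : c < u)
    (hd : d = (a, c) ∨ d = (b, u)) (hd' : d' = (a, c) ∨ d' = (b, u)) (hdd' : d ≠ d')
    (hS : insert d (quadSides a b c u) ⊆ S.1) :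
    ∃ T, insert d' (quadSides a b c u) ⊆ T.1 ∧
      (flipGraph Interleave (polygonDiagonals a u)).Adj S T := by
  refine exists_flipGraph_adj
    (fun e => mem_polygonDiagonals_of_mem_insert_quadSides hab hbc hcu hd')
    (fun e he f => not_interleave_of_mem_insert_quadSides hbc hcu hd' he) ?_
    ((flagLink_insert_quadSides hab hbc hcu hd).trans
      (flagLink_insert_quadSides hab hbc hcu hd').symm) hS
  rcases hd with rfl | rfl <;> rcases hd' with rfl | rfl <;> simp_all [Interleave]

theorem triangleSides_left_exists_adj_iff (hab : a < b) (hbc : b < c) (hcu : c < u) :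
    (triangleSides a b u ⊆ S.1 ∧ ∃ T, triangleSides a c u ⊆ T.1 ∧
      (flipGraph Interleave (polygonDiagonals a u)).Adj S T) ↔
    insert (b, u) (quadSides a b c u) ⊆ S.1 := by
  constructor
  · rintro ⟨hS, T, hT, h⟩
    exact (insert_quadSides_subset_of_adj hab hbc hcu hS hT h).1
  · intro hS
    obtain ⟨T, hT, h⟩ := exists_adj_of_insert_quadSides_subset (d' := (a, c)) hab hbc hcu
      (Or.inr rfl) (Or.inl rfl) (by grind) hS
    exact ⟨triangleSides_left_subset.trans hS, T, triangleSides_right_subset.trans hT, h⟩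

theorem triangleSides_right_exists_adj_iff (hab : a < b) (hbc : b < c) (hcu : c < u) :
    (triangleSides a c u ⊆ T.1 ∧ ∃ S, triangleSides a b u ⊆ S.1 ∧
      (flipGraph Interleave (polygonDiagonals a u)).Adj T S) ↔
    insert (a, c) (quadSides a b c u) ⊆ T.1 := by
  constructor
  · rintro ⟨hT, S, hS, h⟩
    exact (insert_quadSides_subset_of_adj hab hbc hcu hS hT h.symm).2
  · intro hT
    obtain ⟨S, hS, h⟩ := exists_adj_of_insert_quadSides_subset (d' := (b, u)) hab hbc hcu
      (Or.inl rfl) (Or.inr rfl) (by grind) hT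
    exact ⟨triangleSides_right_subset.trans hT, S, triangleSides_left_subset.trans hS, h⟩

end Quadrilateral

section OrientedClass

variable {n a b p q : ℕ} {t : Triangulation n}

theorem mk_mem_assocGraphIso_iff (h : a + (n + 1) = b) {x y : Fin (n + 2)} (hxy : x ≤ y) :
    (a + x.val, a + y.val) ∈ (assocGraphIso h t).1 ↔ s(x, y) ∈ t.1 := by
  rw [coe_assocGraphIso, ← chordEmbedding_mk hxy]
  exact mem_map' _

theorem edgeOfT_mk_iff (h : a + (n + 1) = b) {x y : Fin (n + 2)} (hxy : x < y) :
    EdgeOfT t s(x, y) ↔ ((a + x.val, a + y.val) ∈ polygonDiagonals a b →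
      (a + x.val, a + y.val) ∈ (assocGraphIso h t).1) := by
  rw [mk_mem_assocGraphIso_iff h hxy.le, ← h, ← isDiagonal_mk_iff_of_le hxy.le, EdgeOfT,
    isSide_mk_iff, isDiagonal_mk_iff, and_iff_right hxy.ne, ← or_iff_not_imp_left]

theorem isTriangleOf_zero_last_iff {x : Fin (n + 2)} (hx₀ : 0 < x)
    (hx : x < Fin.last (n + 1)) : IsTriangleOf t 0 x (Fin.last (n + 1)) ↔
      triangleSides 0 x (n + 1) ⊆ (assocGraphIso (zero_add _) t).1 := by
  have hbase : EdgeOfT t s(0, Fin.last (n + 1)) :=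
    Or.inl (isSide_mk_iff.2 ((polyAdj_iff_of_le (Fin.zero_le _)).2 (Or.inr ⟨rfl, rfl⟩)))
  rw [IsTriangleOf, edgeOfT_mk_iff (zero_add (n + 1)) hx₀, edgeOfT_mk_iff (zero_add (n + 1)) hx]
  simp [triangleSides, subset_iff, hx₀.ne, hx.ne, (hx₀.trans hx).ne, hbase, -Prod.forall]

theorem mem_orientedClass_iff (hp : 1 ≤ p) (hpn : p ≤ n) :
    t ∈ orientedClass n p ↔ triangleSides 0 p (n + 1) ⊆ (assocGraphIso (zero_add _) t).1 := by
  have hcast : Fin.ofNat (n + 2) p = ⟨p, by omega⟩ := Fin.ext (Nat.mod_eq_of_lt (by omega))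
  have hlast : Fin.ofNat (n + 2) (n + 1) = Fin.last (n + 1) :=
    Fin.ext (Nat.mod_eq_of_lt (by omega))
  change IsTriangleOf t 0 (Fin.ofNat (n + 2) p) (Fin.ofNat (n + 2) (n + 1)) ↔ _
  rw [hcast, hlast, isTriangleOf_zero_last_iff]
  · exact Fin.lt_def.2 hp
  · exact Fin.lt_def.2 (Nat.lt_succ_of_le hpn)

theorem mem_boundarySet_iff (hp : 1 ≤ p) (hpn : p ≤ n) (hq : 1 ≤ q) (hqn : q ≤ n) :
    t ∈ boundarySet n p q ↔
      triangleSides 0 p (n + 1) ⊆ (assocGraphIso (zero_add _) t).1 ∧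
        ∃ T, triangleSides 0 q (n + 1) ⊆ T.1 ∧
          (flipGraph Interleave _).Adj (assocGraphIso (zero_add _) t) T := by
  refine and_congr (mem_orientedClass_iff hp hpn) ?_
  rw [(assocGraphIso (zero_add _)).surjective.exists]
  simp only [mem_orientedClass_iff hq hqn, SimpleGraph.Iso.map_adj_iff]

end OrientedClass

theorem nonempty_assocGraph_induce_iso {n p q : ℕ} {d : ℕ × ℕ} {B : Set (Triangulation n)}
    (hp : 0 < p) (hpq : p < q) (hqn : q < n + 1) (hd : d = (0, q) ∨ d = (p, n + 1))
    (hB : ∀ t, t ∈ B ↔ insert d (quadSides 0 p q (n + 1)) ⊆ (assocGraphIso (zero_add _) t).1) :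
    Nonempty ((assocGraph n).induce B ≃g (assocGraph (p - 1)).boxProd
      ((assocGraph (q - p - 1)).boxProd (assocGraph (n - q)))) := by
  obtain ⟨cut⟩ := nonempty_flipGraph_induce_quad_iso hp hpq hqn hd
  have hBij : Set.BijOn (assocGraphIso (zero_add _)) B
      {T | insert d (quadSides 0 p q (n + 1)) ⊆ T.1} :=
    (assocGraphIso (zero_add _)).toEquiv.bijOn fun t => (hB t).symm
  exact ⟨(((assocGraphIso (zero_add _)).induce hBij).trans cut).trans
    (boxProdCongr (assocGraphIso (by omega)).symm
      (boxProdCongr (assocGraphIso (by omega)).symm (assocGraphIso (by omega)).symm))⟩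

/-- for every `n ≥ 2` and `1 ≤ p < q ≤ n`, the boundary set `∂_{p,q}`
(triangulations of `Θ_{T_p}` with a neighbor in `Θ_{T_q}`) induces a subgraph of `K_n`
isomorphic to `K_{p-1} □ K_{q-p-1} □ K_{n-q}` (a product `K_i □ K_j □ K_k` with
`i + j + k = n - 2`), and symmetrically for `∂_{q,p} ⊆ Θ_{T_q}`. -/
theorem boundarySet_isomorphic_boxProd (n p q : ℕ) (hn : 2 ≤ n) (hp : 1 ≤ p)
    (hpq : p < q) (hqn : q ≤ n) :
    Nonempty (((assocGraph n).induce (boundarySet n p q)) ≃g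
      ((assocGraph (p - 1)).boxProd
        ((assocGraph (q - p - 1)).boxProd (assocGraph (n - q))))) ∧
    Nonempty (((assocGraph n).induce (boundarySet n q p)) ≃g
      ((assocGraph (p - 1)).boxProd
        ((assocGraph (q - p - 1)).boxProd (assocGraph (n - q))))) := by
  have hp₀ : 0 < p := hp
  have hq : q < n + 1 := Nat.lt_succ_of_le hqn
  constructor
  · refine nonempty_assocGraph_induce_iso hp₀ hpq hq (Or.inr rfl) fun t => ?_
    rw [mem_boundarySet_iff hp (by omega) (by omega) hqn]
    exact triangleSides_left_exists_adj_iff hp₀ hpq hq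
  · refine nonempty_assocGraph_induce_iso hp₀ hpq hq (Or.inl rfl) fun t => ?_
    rw [mem_boundarySet_iff (by omega) hqn hp (by omega)]
    exact triangleSides_right_exists_adj_iff hp₀ hpq hq
end

section
/- For all natural numbers a, b, c, the Catalan numbers satisfy C_{a+b+1} · C_{b+c+1} ≤ C_b · C_{a+b+c+2}. -/
/-!
The ratios `C_{n+1} / C_n = 2 (2n + 1) / (n + 2)` increase with `n`, so the Catalan numbers are
log-convex. For a positive log-convex sequence `f` and `m ≤ n`, moving from `m` to `m + k`
multiplies `f` by at most as much as moving from `n` to `n + k`; the theorem is the case `m = b`,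
`n = b + c + 1`, `k = a + 1`.
-/

/- Transitivity of `a / b ≤ c / d ≤ e / f`, with the denominators cleared. -/
theorem mul_le_mul_cross_trans {R : Type*} [CommMonoidWithZero R] [Preorder R] [MulPosMono R]
    [MulPosReflectLE R] {a b c d e f : R} (hb : 0 ≤ b) (hd : 0 < d) (hf : 0 ≤ f)
    (hac : a * d ≤ c * b) (hce : c * f ≤ e * d) : a * f ≤ e * b := by
  refine le_of_mul_le_mul_right ?_ hd
  calc a * f * d = a * d * f := mul_right_comm a f d
    _ ≤ c * b * f := mul_le_mul_of_nonneg_right hac hf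
    _ = c * f * b := mul_right_comm c b f
    _ ≤ e * d * b := mul_le_mul_of_nonneg_right hce hb
    _ = e * b * d := mul_right_comm e d b

/-- Log-convexity of a sequence, in the multiplicative form `f (n + 1) ^ 2 ≤ f n * f (n + 2)`,
which needs neither logarithms nor division and so applies to sequences of natural numbers.
Positivity of the terms is not part of the notion. -/
def LogConvexSeq {R : Type*} [Monoid R] [LE R] (f : ℕ → R) : Prop :=
  ∀ n, f (n + 1) ^ 2 ≤ f n * f (n + 2)

namespace LogConvexSeq

variable {R : Type*} [CommMonoidWithZero R] [Preorder R] [MulPosMono R] [MulPosReflectLE R]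
  {f : ℕ → R} {m n : ℕ}

theorem succ_mul_le_mul_succ (hf : LogConvexSeq f) (hpos : ∀ i, 0 < f i) (hmn : m ≤ n) :
    f (m + 1) * f n ≤ f (n + 1) * f m := by
  induction n, hmn using Nat.le_induction with
  | base => exact le_rfl
  | succ n _ ih =>
    have hstep : f (n + 1) * f (n + 1) ≤ f (n + 2) * f n := by
      simpa only [sq, mul_comm (f n)] using hf n
    exact mul_le_mul_cross_trans (hpos m).le (hpos n) (hpos (n + 1)).le ih hstep

theorem add_mul_le_mul_add (hf : LogConvexSeq f) (hpos : ∀ i, 0 < f i) (hmn : m ≤ n) (k : ℕ) :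
    f (m + k) * f n ≤ f m * f (n + k) := by
  induction k with
  | zero => exact le_rfl
  | succ k ih =>
    have hstep : f (m + k + 1) * f (n + k) ≤ f (m + k) * f (n + k + 1) := by
      simpa only [mul_comm (f (m + k))] using
        hf.succ_mul_le_mul_succ hpos (Nat.add_le_add_right hmn k)
    exact mul_le_mul_cross_trans (hpos _).le (hpos (n + k)) (hpos n).le hstep ih

end LogConvexSeq

theorem catalan_pos (n : ℕ) : 0 < catalan n := by
  refine Nat.pos_of_mul_pos_left (a := n + 1) ?_
  rw [succ_mul_catalan_eq_centralBinom]
  exact n.centralBinom_pos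

theorem add_two_mul_catalan_succ (n : ℕ) :
    (n + 2) * catalan (n + 1) = 2 * (2 * n + 1) * catalan n := by
  refine Nat.eq_of_mul_eq_mul_left n.succ_pos ?_
  calc (n + 1) * ((n + 2) * catalan (n + 1))
      = (n + 1) * (n + 1).centralBinom := by rw [← succ_mul_catalan_eq_centralBinom]
    _ = 2 * (2 * n + 1) * n.centralBinom := n.succ_mul_centralBinom_succ
    _ = (n + 1) * (2 * (2 * n + 1) * catalan n) := by
      rw [← succ_mul_catalan_eq_centralBinom, mul_left_comm]

theorem logConvexSeq_catalan : LogConvexSeq catalan := by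
  intro n
  have hratio : 2 * (2 * n + 1) * (n + 3) ≤ 2 * (2 * n + 3) * (n + 2) := by linarith
  have hpos : 0 < (n + 2) * (n + 3) := by positivity
  refine Nat.le_of_mul_le_mul_left ?_ hpos
  calc (n + 2) * (n + 3) * catalan (n + 1) ^ 2
      = (n + 2) * catalan (n + 1) * (n + 3) * catalan (n + 1) := by ring
    _ = 2 * (2 * n + 1) * (n + 3) * (catalan n * catalan (n + 1)) := by
      rw [add_two_mul_catalan_succ]; ring
    _ ≤ 2 * (2 * n + 3) * (n + 2) * (catalan n * catalan (n + 1)) :=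
      Nat.mul_le_mul_right _ hratio
    _ = (n + 2) * catalan n * (2 * (2 * (n + 1) + 1) * catalan (n + 1)) := by ring
    _ = (n + 2) * (n + 3) * (catalan n * catalan (n + 2)) := by
      rw [← add_two_mul_catalan_succ (n + 1)]; ring

/-- For all natural numbers `a`, `b`, `c`, the Catalan numbers satisfy
`C_{a+b+1} · C_{b+c+1} ≤ C_b · C_{a+b+c+2}`. -/
theorem catalan_mul_catalan_le (a b c : ℕ) :
    catalan (a + b + 1) * catalan (b + c + 1) ≤ catalan b * catalan (a + b + c + 2) := by
  have hle : b ≤ b + c + 1 := by lia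
  have hleft : a + b + 1 = b + (a + 1) := by lia
  have hright : a + b + c + 2 = b + c + 1 + (a + 1) := by lia
  rw [hleft, hright]
  exact logConvexSeq_catalan.add_mul_le_mul_add catalan_pos hle (a + 1)
end

section
/- Let G_1, …, G_k (k ≥ 1) be finite graphs with nonempty vertex sets, and let h_1, …, h_k ≥ 0 be real numbers such that for each i and every nonempty S_i ⊆ V(G_i) with 2|S_i| ≤ |V(G_i)|, the number of edges of G_i with exactly one endpoint in S_i is at least h_i·|S_i|. Then for every nonempty S ⊆ V(G_1)×⋯×V(G_k) with 2|S| ≤ |V(G_1)|·…·|V(G_k)|, the number of edges of the Cartesian product G_1 □ G_2 □ ⋯ □ G_k with exactly one endpoint in S is at least (1/2)·(min_i h_i)·|S|. In other words, h(G_1□⋯□G_k) ≥ (1/2)·min_i h(G_i). -/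
/-- The Cartesian (box) product of a finite family of graphs: two tuples are adjacent
iff they agree in all but one coordinate, in which they are adjacent. For an indexed
family this agrees (up to the obvious isomorphism) with the associatively iterated
binary box product `G_1 □ ⋯ □ G_k`. -/
def piBoxProd {ι : Type*} {V : ι → Type*} (G : ∀ i, SimpleGraph (V i)) :
    SimpleGraph (∀ i, V i) where
  Adj x y := ∃ i, (G i).Adj (x i) (y i) ∧ ∀ j, j ≠ i → x j = y j
  symm := by
    constructor
    rintro x y ⟨i, ha, he⟩
    exact ⟨i, ha.symm, fun j hj => (he j hj).symm⟩
  loopless := by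
    constructor
    rintro x ⟨i, ha, -⟩
    exact (G i).loopless.irrefl _ ha

/-!
Work with the sparsity `|V| |∂S| / (|S| |Sᶜ|)` of cuts instead of the expansion `|∂S| / |S|`. For
`|S| ≤ |V| / 2` the two differ by a factor `|V| / |Sᶜ|` between `1` and `2`, and this is the only
loss: lower bounds on sparsity pass to box products unchanged.

To see this, go from `x ∈ S` to `y ∉ S` by replacing the coordinates of `x` by those of `y` one at a
time. Some replacement leaves `S`, say that of coordinate `i`, at the hybrid point `z`. Together
with the complementary hybrid `w` of `y` and `x`, this `z` determines `(x, y)`, so `|S| |Sᶜ|` is at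
most the number of triples `(i, z, w)` with `z ∈ S` and `update z i (w i) ∉ S`. For fixed `i` that
number is governed by the cuts which `S` induces on the copies of `G i` in direction `i`.
-/

section Expansion

variable {V : Type*} {G : SimpleGraph V} {c d : ℝ}

/-- The graph `G` has edge expansion at least `c`. This holds for every `c` if `G` has at most one
vertex, since then no `S` is admissible in the minimum defining `h(G)`. -/
def HasEdgeExpansion (G : SimpleGraph V) (c : ℝ) : Prop :=
  ∀ S : Set V, S.Nonempty → 2 * S.ncard ≤ Nat.card V →
    c * S.ncard ≤ ((edgeBoundary G S).ncard : ℝ)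

/-- Every cut of `G` has sparsity `|V| |∂S| / (|S| |Sᶜ|)` at least `c`. Denominators are cleared, so
the trivial cuts `∅` and `V` satisfy the condition automatically. -/
def HasCutSparsity (G : SimpleGraph V) (c : ℝ) : Prop :=
  ∀ S : Set V, c * (S.ncard * Sᶜ.ncard) ≤ Nat.card V * ((edgeBoundary G S).ncard : ℝ)

lemma HasEdgeExpansion.mono (hG : HasEdgeExpansion G d) (hcd : c ≤ d) : HasEdgeExpansion G c :=
  fun S hS hhalf ↦ (mul_le_mul_of_nonneg_right hcd S.ncard.cast_nonneg).trans (hG S hS hhalf)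

lemma HasCutSparsity.of_nonpos (hc : c ≤ 0) : HasCutSparsity G c :=
  fun _ ↦ (mul_nonpos_of_nonpos_of_nonneg hc (by positivity)).trans (by positivity)

lemma edgeBoundary_compl (G : SimpleGraph V) (S : Set V) :
    edgeBoundary G Sᶜ = edgeBoundary G S := by
  ext e
  constructor
  · rintro ⟨he, u, v, rfl, hu, hv⟩
    exact ⟨he, v, u, Sym2.eq_swap, Set.notMem_compl_iff.mp hv, hu⟩
  · rintro ⟨he, u, v, rfl, hu, hv⟩
    exact ⟨he, v, u, Sym2.eq_swap, hv, Set.notMem_compl_iff.mpr hu⟩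

lemma ncard_edgeBoundary (G : SimpleGraph V) (S : Set V) :
    (edgeBoundary G S).ncard = {p : V × V | p.1 ∈ S ∧ p.2 ∉ S ∧ G.Adj p.1 p.2}.ncard := by
  symm
  refine Set.ncard_congr (fun p _ ↦ s(p.1, p.2)) ?_ ?_ ?_
  · rintro ⟨u, v⟩ ⟨hu, hv, huv⟩
    exact ⟨huv, u, v, rfl, hu, hv⟩
  · rintro ⟨u, v⟩ ⟨u', v'⟩ ⟨hu, -, -⟩ ⟨-, hv', -⟩ he
    obtain ⟨rfl, rfl⟩ | ⟨rfl, rfl⟩ := Sym2.eq_iff.mp he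
    · rfl
    · exact absurd hu hv'
  · rintro _ ⟨he, u, v, rfl, hu, hv⟩
    exact ⟨(u, v), ⟨hu, hv, he⟩, rfl⟩

lemma ncard_edgeBoundary_top (S : Set V) :
    (edgeBoundary ⊤ S).ncard = S.ncard * Sᶜ.ncard := by
  rw [ncard_edgeBoundary, ← Set.ncard_prod]
  congr 1
  ext ⟨u, v⟩
  simp only [SimpleGraph.top_adj, Set.mem_ofPred_eq, Set.mem_prod, Set.mem_compl_iff]
  exact ⟨fun h ↦ ⟨h.1, h.2.1⟩, fun h ↦ ⟨h.1, h.2, ne_of_mem_of_not_mem h.1 h.2⟩⟩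

variable [Finite V]

lemma HasEdgeExpansion.hasCutSparsity (hG : HasEdgeExpansion G c) : HasCutSparsity G c := by
  intro S
  wlog hhalf : 2 * S.ncard ≤ Nat.card V generalizing S
  · have hcompl : 2 * Sᶜ.ncard ≤ Nat.card V := by have := S.ncard_add_ncard_compl; omega
    simpa only [compl_compl, edgeBoundary_compl, mul_comm (Sᶜ.ncard : ℝ)] using this Sᶜ hcompl
  obtain rfl | hS := S.eq_empty_or_nonempty
  · rw [Set.ncard_empty, Nat.cast_zero, zero_mul, mul_zero]
    positivity
  calc c * (S.ncard * Sᶜ.ncard) = c * S.ncard * Sᶜ.ncard := (mul_assoc ..).symm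
    _ ≤ (edgeBoundary G S).ncard * Nat.card V := by
      gcongr
      · exact hG S hS hhalf
      · exact Set.ncard_le_card Sᶜ
    _ = Nat.card V * (edgeBoundary G S).ncard := mul_comm ..

lemma HasCutSparsity.hasEdgeExpansion (hG : HasCutSparsity G c) : HasEdgeExpansion G (c / 2) := by
  intro S hS hhalf
  obtain hc | hc := le_total c 0
  · exact (mul_nonpos_of_nonpos_of_nonneg (by linarith) (by positivity)).trans (by positivity)
  have hV : (0 : ℝ) < Nat.card V := by
    have : Nonempty V := hS.to_type
    exact_mod_cast Nat.card_pos
  have hcompl : (Nat.card V : ℝ) ≤ 2 * Sᶜ.ncard := by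
    have := S.ncard_add_ncard_compl
    exact_mod_cast (by omega : Nat.card V ≤ 2 * Sᶜ.ncard)
  refine le_of_mul_le_mul_left ?_ hV
  calc Nat.card V * (c / 2 * S.ncard) ≤ 2 * Sᶜ.ncard * (c / 2 * S.ncard) := by gcongr
    _ = c * (S.ncard * Sᶜ.ncard) := by ring
    _ ≤ Nat.card V * (edgeBoundary G S).ncard := hG S

end Expansion

section Counting

lemma sum_ncard_fiber {α β : Type*} [Fintype α] [Finite β] (A : Set (α × β)) :
    ∑ x, {y | (x, y) ∈ A}.ncard = A.ncard := by
  have := Fintype.ofFinite β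
  classical
  simp only [Set.ncard_eq_toFinset_card', Set.toFinset_card, Fintype.card_subtype,
    Set.mem_ofPred_eq, Finset.card_filter, Fintype.sum_prod_type]

open Function

variable {ι : Type*} {V : ι → Type*}

lemma sum_sum_update [Fintype ι] [DecidableEq ι] [∀ i, Fintype (V i)] {M : Type*}
    [AddCommMonoid M] (i : ι) (g : (∀ j, V j) → M) :
    ∑ z, ∑ a, g (update z i a) = Nat.card (V i) • ∑ z, g z := by
  have hswap : Involutive fun p : (∀ j, V j) × V i ↦ (update p.1 i p.2, p.1 i) := fun p ↦ by simp
  calc ∑ z, ∑ a, g (update z i a) = ∑ p : (∀ j, V j) × V i, g (update p.1 i p.2) :=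
        (Fintype.sum_prod_type' fun z a ↦ g (update z i a)).symm
    _ = ∑ p : (∀ j, V j) × V i, g p.1 := hswap.bijective.sum_comp fun p ↦ g p.1
    _ = Nat.card (V i) • ∑ z, g z := by
      simp [Fintype.sum_prod_type, Finset.smul_sum]

lemma card_mul_ncard_eval_preimage [Finite ι] [∀ i, Finite (V i)] (i : ι) (A : Set (V i)) :
    Nat.card (V i) * {w : ∀ j, V j | w i ∈ A}.ncard = Nat.card (∀ j, V j) * A.ncard := by
  have := Fintype.ofFinite ι
  have := fun i ↦ Fintype.ofFinite (V i)
  classical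
  have := sum_sum_update i fun w : ∀ j, V j ↦ if w i ∈ A then 1 else 0
  simpa [Set.ncard_eq_toFinset_card', Fintype.card_subtype] using this.symm

end Counting

section BoxProd

open Function

variable {ι : Type*} [DecidableEq ι] {V : ι → Type*}

/-- The edges leaving `S` in the copies of `H` in direction `i`, each given as the pair of its
endpoint in `S` and the `i`-th coordinate of its other endpoint. -/
def crossings (S : Set (∀ j, V j)) (i : ι) (H : SimpleGraph (V i)) : Set ((∀ j, V j) × V i) :=
  {p | p.1 ∈ S ∧ update p.1 i p.2 ∉ S ∧ H.Adj (p.1 i) p.2}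

/-- The pairs `(z, w)` for which replacing the `i`-th coordinate of `z` by that of `w` leaves
`S`. -/
def exitPairs (S : Set (∀ j, V j)) (i : ι) : Set ((∀ j, V j) × ∀ j, V j) :=
  {p | p.1 ∈ S ∧ update p.1 i (p.2 i) ∉ S}

lemma mem_exitPairs_iff {S : Set (∀ j, V j)} {i : ι} {z w : ∀ j, V j} :
    (z, w) ∈ exitPairs S i ↔ (z, w i) ∈ crossings S i ⊤ := by
  refine ⟨fun ⟨hz, hw⟩ ↦ ⟨hz, hw, fun (hzw : z i = w i) ↦ hw ?_⟩, fun ⟨hz, hw, _⟩ ↦ ⟨hz, hw⟩⟩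
  simpa only [← hzw, update_eq_self] using hz

lemma ncard_edgeBoundary_piBoxProd [Fintype ι] [∀ i, Finite (V i)] (G : ∀ i, SimpleGraph (V i))
    (S : Set (∀ j, V j)) :
    (edgeBoundary (piBoxProd G) S).ncard = ∑ i, (crossings S i (G i)).ncard := by
  let toPair (i : ι) (p : (∀ j, V j) × V i) := (p.1, update p.1 i p.2)
  have hinj (i : ι) : Injective (toPair i) := by
    rintro ⟨x, a⟩ ⟨y, b⟩ h
    obtain ⟨rfl, hab⟩ := Prod.mk.inj h
    exact Prod.ext rfl (update_injective x i hab)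
  have hdisj : Pairwise (Disjoint on fun i ↦ toPair i '' crossings S i (G i)) := by
    intro i j hij
    rw [onFun, Set.disjoint_left]
    rintro _ ⟨⟨x, a⟩, ⟨-, -, hadj⟩, rfl⟩ ⟨⟨y, b⟩, -, h⟩
    obtain ⟨rfl, hab⟩ := Prod.mk.inj h
    refine hadj.ne ?_
    simpa [hij] using congrFun hab i
  have hunion : {p : (∀ j, V j) × ∀ j, V j | p.1 ∈ S ∧ p.2 ∉ S ∧ (piBoxProd G).Adj p.1 p.2} =
      ⋃ i, toPair i '' crossings S i (G i) := by
    ext ⟨x, y⟩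
    simp only [Set.mem_iUnion]
    constructor
    · rintro ⟨hx, hy, i, hadj, heq⟩
      have hxy : update x i (y i) = y := update_eq_iff.mpr ⟨rfl, heq⟩
      exact ⟨i, (x, y i), ⟨hx, by rwa [hxy], hadj⟩, Prod.ext rfl hxy⟩
    · rintro ⟨i, ⟨x, a⟩, ⟨hx, hy, hadj⟩, h⟩
      obtain ⟨rfl, rfl⟩ := Prod.mk.inj h
      exact ⟨hx, hy, i, by simpa using hadj, fun j hj ↦ (update_of_ne hj a x).symm⟩
  rw [ncard_edgeBoundary, hunion, Set.ncard_iUnion_of_finite (fun _ ↦ Set.toFinite _) hdisj,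
    finsum_eq_sum_of_fintype]
  exact Finset.sum_congr rfl fun i _ ↦ Set.ncard_image_of_injective _ (hinj i)

lemma card_mul_ncard_crossings [Fintype ι] [∀ i, Fintype (V i)] (S : Set (∀ j, V j)) (i : ι)
    (H : SimpleGraph (V i)) :
    Nat.card (V i) * (crossings S i H).ncard =
      ∑ z, (edgeBoundary H (update z i ⁻¹' S)).ncard := by
  rw [← sum_ncard_fiber, ← smul_eq_mul, ← sum_sum_update i]
  refine Finset.sum_congr rfl fun z _ ↦ ?_
  rw [ncard_edgeBoundary, ← sum_ncard_fiber]
  simp only [crossings, Set.mem_ofPred_eq, Set.mem_preimage, update_idem, update_self]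

lemma card_mul_ncard_exitPairs [Finite ι] [∀ i, Finite (V i)] (S : Set (∀ j, V j)) (i : ι) :
    Nat.card (V i) * (exitPairs S i).ncard =
      Nat.card (∀ j, V j) * (crossings S i ⊤).ncard := by
  have := Fintype.ofFinite (∀ j, V j)
  simp only [← sum_ncard_fiber, Finset.mul_sum, mem_exitPairs_iff]
  exact Finset.sum_congr rfl fun z _ ↦ card_mul_ncard_eval_preimage i {a | (z, a) ∈ crossings S i ⊤}

lemma ncard_exit_piecewise_le [Finite ι] [∀ i, Finite (V i)] (S : Set (∀ j, V j)) (s : Finset ι) :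
    {p : (∀ j, V j) × ∀ j, V j | p.1 ∈ S ∧ s.piecewise p.2 p.1 ∉ S}.ncard ≤
      ∑ i ∈ s, (exitPairs S i).ncard := by
  induction s using Finset.induction_on with
  | empty => simp
  | insert i s hi ih =>
    let swap (p : (∀ j, V j) × ∀ j, V j) := (s.piecewise p.2 p.1, s.piecewise p.1 p.2)
    have hswap : Involutive swap := fun p ↦ by simp [swap, Finset.piecewise_same]
    have hsplit : {p : (∀ j, V j) × ∀ j, V j | p.1 ∈ S ∧ (insert i s).piecewise p.2 p.1 ∉ S} ⊆
        swap ⁻¹' exitPairs S i ∪ {p | p.1 ∈ S ∧ s.piecewise p.2 p.1 ∉ S} := by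
      rintro ⟨x, y⟩ ⟨hx, hxy⟩
      by_cases hmid : s.piecewise y x ∈ S
      · have hyi : s.piecewise x y i = y i := Finset.piecewise_eq_of_notMem s x y hi
        refine Or.inl ⟨hmid, ?_⟩
        simpa only [swap, hyi, Finset.piecewise_insert] using hxy
      · exact Or.inr ⟨hx, hmid⟩
    rw [Finset.sum_insert hi]
    calc _ ≤ (swap ⁻¹' exitPairs S i).ncard + _ :=
          (Set.ncard_le_ncard hsplit).trans (Set.ncard_union_le _ _)
      _ = (exitPairs S i).ncard + _ := by
          rw [Set.ncard_preimage_of_injective_subset_range hswap.injective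
            (hswap.surjective.range_eq ▸ Set.subset_univ _)]
      _ ≤ _ := by gcongr

lemma ncard_mul_ncard_compl_le [Fintype ι] [∀ i, Finite (V i)] (S : Set (∀ j, V j)) :
    S.ncard * Sᶜ.ncard ≤ ∑ i, (exitPairs S i).ncard := by
  have h := ncard_exit_piecewise_le S Finset.univ
  simp only [Finset.piecewise_univ] at h
  rw [← Set.ncard_prod]
  exact h

lemma HasCutSparsity.mul_ncard_crossings_top_le [Finite ι] [∀ i, Finite (V i)] {i : ι}
    [Nonempty (V i)] {H : SimpleGraph (V i)} {c : ℝ} (hH : HasCutSparsity H c)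
    (S : Set (∀ j, V j)) :
    c * (crossings S i ⊤).ncard ≤ Nat.card (V i) * ((crossings S i H).ncard : ℝ) := by
  have := Fintype.ofFinite ι
  have := fun j ↦ Fintype.ofFinite (V j)
  have hcard : (0 : ℝ) < Nat.card (V i) := by exact_mod_cast Nat.card_pos
  have hsum (K : SimpleGraph (V i)) : (Nat.card (V i) : ℝ) * (crossings S i K).ncard =
      ∑ z, ((edgeBoundary K (update z i ⁻¹' S)).ncard : ℝ) := by
    exact_mod_cast card_mul_ncard_crossings S i K
  refine le_of_mul_le_mul_left ?_ hcard
  rw [mul_left_comm, hsum, hsum, Finset.mul_sum, Finset.mul_sum]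
  refine Finset.sum_le_sum fun z _ ↦ ?_
  rw [ncard_edgeBoundary_top, Nat.cast_mul]
  exact hH (update z i ⁻¹' S)

lemma HasCutSparsity.mul_ncard_exitPairs_le [Finite ι] [∀ i, Finite (V i)] {i : ι}
    [Nonempty (V i)] {H : SimpleGraph (V i)} {c : ℝ} (hH : HasCutSparsity H c)
    (S : Set (∀ j, V j)) :
    c * (exitPairs S i).ncard ≤ Nat.card (∀ j, V j) * ((crossings S i H).ncard : ℝ) := by
  have hcard : (0 : ℝ) < Nat.card (V i) := by exact_mod_cast Nat.card_pos
  have hexit : (Nat.card (V i) : ℝ) * (exitPairs S i).ncard =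
      Nat.card (∀ j, V j) * (crossings S i ⊤).ncard := by
    exact_mod_cast card_mul_ncard_exitPairs S i
  refine le_of_mul_le_mul_left ?_ hcard
  calc Nat.card (V i) * (c * (exitPairs S i).ncard)
      = Nat.card (∀ j, V j) * (c * (crossings S i ⊤).ncard) := by
        rw [mul_left_comm, hexit, mul_left_comm]
    _ ≤ Nat.card (∀ j, V j) * (Nat.card (V i) * (crossings S i H).ncard) := by
        gcongr ?_ * ?_
        exact hH.mul_ncard_crossings_top_le S
    _ = Nat.card (V i) * (Nat.card (∀ j, V j) * (crossings S i H).ncard) := mul_left_comm ..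

end BoxProd

theorem hasCutSparsity_piBoxProd {ι : Type*} [Finite ι] {V : ι → Type*} [∀ i, Finite (V i)]
    {G : ∀ i, SimpleGraph (V i)} {c : ℝ} (hG : ∀ i, HasCutSparsity (G i) c) :
    HasCutSparsity (piBoxProd G) c := by
  classical
  have := Fintype.ofFinite ι
  obtain hc | hc := le_total c 0
  · exact HasCutSparsity.of_nonpos hc
  intro S
  obtain rfl | ⟨x, -⟩ := S.eq_empty_or_nonempty
  · rw [Set.ncard_empty, Nat.cast_zero, zero_mul, mul_zero]
    positivity
  have (i : ι) : Nonempty (V i) := ⟨x i⟩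
  calc c * (S.ncard * Sᶜ.ncard) ≤ c * ∑ i, ((exitPairs S i).ncard : ℝ) := by
        gcongr
        exact_mod_cast ncard_mul_ncard_compl_le S
    _ = ∑ i, c * ((exitPairs S i).ncard : ℝ) := Finset.mul_sum ..
    _ ≤ ∑ i, Nat.card (∀ j, V j) * ((crossings S i (G i)).ncard : ℝ) :=
        Finset.sum_le_sum fun i _ ↦ (hG i).mul_ncard_exitPairs_le S
    _ = Nat.card (∀ j, V j) * ((edgeBoundary (piBoxProd G) S).ncard : ℝ) := by
        rw [ncard_edgeBoundary_piBoxProd, Nat.cast_sum, Finset.mul_sum]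

theorem boxProd_expansion_general {ι : Type*} [Finite ι] {V : ι → Type*} [∀ i, Finite (V i)]
    {G : ∀ i, SimpleGraph (V i)} {c : ℝ} (hG : ∀ i, HasEdgeExpansion (G i) c) :
    HasEdgeExpansion (piBoxProd G) (c / 2) :=
  (hasCutSparsity_piBoxProd fun i ↦ (hG i).hasCutSparsity).hasEdgeExpansion

/-- if each finite nonempty graph `G i` has edge expansion at least `h i ≥ 0`
(every nonempty `S_i` with `2|S_i| ≤ |V(G_i)|` has `|∂S_i| ≥ h_i·|S_i|`), then the
Cartesian product `G_1 □ ⋯ □ G_k` has edge expansion at least `(1/2)·min_i h_i`. -/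
theorem boxProd_expansion {k : ℕ} (hk : 1 ≤ k) (V : Fin k → Type*)
    [∀ i, Fintype (V i)] [∀ i, Nonempty (V i)]
    (G : ∀ i, SimpleGraph (V i)) (h : Fin k → ℝ) (hnn : ∀ i, 0 ≤ h i)
    (hexp : ∀ i, ∀ S : Set (V i), S.Nonempty → 2 * S.ncard ≤ Fintype.card (V i) →
      h i * (S.ncard : ℝ) ≤ ((edgeBoundary (G i) S).ncard : ℝ))
    (S : Set (∀ i, V i)) (hS : S.Nonempty)
    (hhalf : 2 * S.ncard ≤ Fintype.card (∀ i, V i)) :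
    (1 / 2 : ℝ) *
        (Finset.univ.inf' (Finset.univ_nonempty_iff.mpr ⟨⟨0, hk⟩⟩) h) *
        (S.ncard : ℝ) ≤
      ((edgeBoundary (piBoxProd G) S).ncard : ℝ) := by
  have hG (i : Fin k) : HasEdgeExpansion (G i) (h i) := fun T hT hTcard ↦
    hexp i T hT (Nat.card_eq_fintype_card (α := V i) ▸ hTcard)
  rw [one_div_mul_eq_div]
  exact boxProd_expansion_general (fun i ↦ (hG i).mono (Finset.inf'_le h (Finset.mem_univ i)))
    S hS (Nat.card_eq_fintype_card (α := ∀ i, V i) ▸ hhalf)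
end

section
/- Let G and H be finite connected graphs admitting uniform multicommodity flows g and h, respectively, each with congestion at most ρ. Then the Cartesian product G □ H admits a uniform multicommodity flow with congestion at most ρ. -/
open Classical

/-- A multicommodity flow in a (di)graph with allowed arcs `Allowed` and demands `D`:
for every ordered pair `(z, w)` of vertices, `f z w` is a nonnegative flow on arcs,
supported on allowed arcs, routing `D z w` units from `z` to `w` (net outflow `D z w`
at `z`, net inflow `D z w` at `w`, conservation elsewhere). -/
def IsMCFlow {V : Type*} [Fintype V] (Allowed : V → V → Prop) (D : V → V → ℝ)
    (f : V → V → V → V → ℝ) : Prop :=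
  (∀ z w x y, 0 ≤ f z w x y) ∧
  (∀ z w x y, f z w x y ≠ 0 → Allowed x y) ∧
  (∀ z w v, ((∑ y, f z w v y) - ∑ y, f z w y v) =
      (if v = z then D z w else 0) - (if v = w then D z w else 0))

/-!
Route each commodity `(s₁, s₂) → (t₁, t₂)` first inside the copy `V × {s₂}` of `G` and then inside
the copy `{t₁} × W` of `H`. An arc of `V × {b}` is used only by the pairs with `s₂ = b`, and for
each `(s₁, t₁)` these are `|W|` many, one for each `t₂`. Its load is thus `|W|` times the load of
the corresponding arc of `G`, a factor absorbed by `|V × W| = |V| |W|`; symmetrically for `H`.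
-/

section Divergence

variable {V W : Type*} [Fintype V] [Fintype W]

/-- The net outflow at `v` of a function `φ` on ordered pairs of vertices. -/
def divergence (φ : V → V → ℝ) (v : V) : ℝ :=
  (∑ y, φ v y) - ∑ y, φ y v

theorem divergence_add (φ ψ : V → V → ℝ) (v : V) :
    divergence (fun x y => φ x y + ψ x y) v = divergence φ v + divergence ψ v := by
  simp only [divergence, Finset.sum_add_distrib]
  ring

theorem divergence_comp_equiv (e : V ≃ W) (φ : W → W → ℝ) (v : V) :
    divergence (fun x y => φ (e x) (e y)) v = divergence φ (e v) := by
  simp only [divergence, e.sum_comp (φ (e v)), e.sum_comp (φ · (e v))]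

end Divergence

/-- The flow `φ` on `V`, copied onto the fiber `V × {b}` of `V × W`. -/
noncomputable def fiberFlow {V W : Type*} (b : W) (φ : V → V → ℝ) (x y : V × W) : ℝ :=
  if x.2 = b ∧ y.2 = b then φ x.1 y.1 else 0

section FiberFlow

variable {V W : Type*}

theorem fiberFlow_nonneg {φ : V → V → ℝ} (hφ : ∀ x y, 0 ≤ φ x y) (b : W) (x y : V × W) :
    0 ≤ fiberFlow b φ x y := by
  unfold fiberFlow
  split_ifs
  exacts [hφ _ _, le_rfl]

theorem fiberFlow_ne_zero_iff {b : W} {φ : V → V → ℝ} {x y : V × W} :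
    fiberFlow b φ x y ≠ 0 ↔ (x.2 = b ∧ y.2 = b) ∧ φ x.1 y.1 ≠ 0 := by
  simp only [fiberFlow, ne_eq, ite_eq_right_iff, Classical.not_imp]

theorem divergence_fiberFlow [Fintype V] [Fintype W] (b : W) (φ : V → V → ℝ) (v : V × W) :
    divergence (fiberFlow b φ) v = if v.2 = b then divergence φ v.1 else 0 := by
  by_cases hv : v.2 = b <;>
    simp [divergence, fiberFlow, hv, Fintype.sum_prod_type]

theorem sum_fiberFlow [Fintype W] (φ : V → V → ℝ) (x y : V × W) :
    ∑ b, fiberFlow b φ x y = if x.2 = y.2 then φ x.1 y.1 else 0 := by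
  simp [fiberFlow, ite_and, eq_comm]

end FiberFlow

section Congestion

variable {V W : Type*} [Fintype V] [Fintype W]

/-- The congestion that the multicommodity flow `f` causes on the single arc `(x, y)`. -/
noncomputable def arcCongestion (f : V → V → V → V → ℝ) (x y : V) : ℝ :=
  (∑ s, ∑ t, f s t x y) / (Fintype.card V : ℝ)

theorem arcCongestion_add (f g : V → V → V → V → ℝ) (x y : V) :
    arcCongestion (fun s t x y => f s t x y + g s t x y) x y =
      arcCongestion f x y + arcCongestion g x y := by
  simp only [arcCongestion, Finset.sum_add_distrib, add_div]

theorem arcCongestion_flip (f : V → V → V → V → ℝ) (x y : V) :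
    arcCongestion (fun s t => f t s) x y = arcCongestion f x y := by
  rw [arcCongestion, Finset.sum_comm, arcCongestion]

theorem arcCongestion_comp_equiv (e : V ≃ W) (f : W → W → W → W → ℝ) (x y : V) :
    arcCongestion (fun s t x y => f (e s) (e t) (e x) (e y)) x y =
      arcCongestion f (e x) (e y) := by
  rw [arcCongestion, arcCongestion, Fintype.card_congr e]
  congr 1
  exact Fintype.sum_equiv e _ _ fun s => Fintype.sum_equiv e _ _ fun t => rfl

theorem arcCongestion_fiberFlow (g : V → V → V → V → ℝ) (x y : V × W) :
    arcCongestion (fun s t : V × W => fiberFlow s.2 (g s.1 t.1)) x y =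
      if x.2 = y.2 then arcCongestion g x.1 y.1 else 0 := by
  have hW : (Fintype.card W : ℝ) ≠ 0 := by
    have : Nonempty W := ⟨x.2⟩
    exact_mod_cast Fintype.card_ne_zero
  have total : ∑ s : V × W, ∑ t : V × W, fiberFlow s.2 (g s.1 t.1) x y =
      (if x.2 = y.2 then ∑ s, ∑ t, g s t x.1 y.1 else 0) * Fintype.card W := by
    calc ∑ s : V × W, ∑ t : V × W, fiberFlow s.2 (g s.1 t.1) x y
        = ∑ s : V, ∑ b : W, ∑ t : V × W, fiberFlow b (g s t.1) x y := Fintype.sum_prod_type _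
      _ = ∑ s : V, ∑ t : V × W, ∑ b : W, fiberFlow b (g s t.1) x y :=
          Finset.sum_congr rfl fun _ _ => Finset.sum_comm
      _ = ∑ s : V, ∑ t : V × W, if x.2 = y.2 then g s t.1 x.1 y.1 else 0 := by
          simp only [sum_fiberFlow]
      _ = _ := by
          split_ifs <;> simp [Fintype.sum_prod_type, Finset.sum_mul, mul_comm (Fintype.card W : ℝ)]
  rw [arcCongestion, total, Fintype.card_prod, Nat.cast_mul, mul_div_mul_right _ _ hW, ite_div,
    zero_div, arcCongestion]

end Congestion

section BoxFlow

variable {V W : Type*}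

/-- The two-leg routing on `V × W`: the commodity from `s` to `t` follows `g` from `s` to
`(t.1, s.2)` and then `f` from there to `t`. The second leg is a `fiberFlow` on `W × V`, read
through `Prod.swap`. -/
noncomputable def boxFlow (g : V → V → V → V → ℝ) (f : W → W → W → W → ℝ) (s t x y : V × W) : ℝ :=
  fiberFlow s.2 (g s.1 t.1) x y + fiberFlow t.1 (f s.2 t.2) x.swap y.swap

theorem divergence_boxFlow [Fintype V] [Fintype W] (g : V → V → V → V → ℝ)
    (f : W → W → W → W → ℝ) (s t v : V × W) :
    divergence (boxFlow g f s t) v =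
      (if v.2 = s.2 then divergence (g s.1 t.1) v.1 else 0) +
        (if v.1 = t.1 then divergence (f s.2 t.2) v.2 else 0) := by
  have second_leg := divergence_comp_equiv (Equiv.prodComm V W) (fiberFlow t.1 (f s.2 t.2)) v
  simp only [Equiv.prodComm_apply] at second_leg
  unfold boxFlow
  rw [divergence_add, second_leg, divergence_fiberFlow, divergence_fiberFlow, Prod.fst_swap,
    Prod.snd_swap]

theorem arcCongestion_boxFlow [Fintype V] [Fintype W] (g : V → V → V → V → ℝ)
    (f : W → W → W → W → ℝ) (x y : V × W) :
    arcCongestion (boxFlow g f) x y =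
      (if x.2 = y.2 then arcCongestion g x.1 y.1 else 0) +
        (if x.1 = y.1 then arcCongestion f x.2 y.2 else 0) := by
  have second_leg : arcCongestion
      (fun s t x y : V × W => fiberFlow t.1 (f s.2 t.2) x.swap y.swap) x y =
        if x.1 = y.1 then arcCongestion f x.2 y.2 else 0 := by
    calc _ = arcCongestion (fun s t : W × V => fiberFlow t.2 (f s.1 t.1)) x.swap y.swap :=
          arcCongestion_comp_equiv (Equiv.prodComm V W) _ x y
      _ = arcCongestion (fun s t : W × V => fiberFlow s.2 (f t.1 s.1)) x.swap y.swap :=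
          arcCongestion_flip (fun s t : W × V => fiberFlow s.2 (f t.1 s.1)) x.swap y.swap
      _ = if x.1 = y.1 then arcCongestion (fun s t => f t s) x.2 y.2 else 0 :=
          arcCongestion_fiberFlow (fun s t => f t s) x.swap y.swap
      _ = _ := by rw [arcCongestion_flip]
  unfold boxFlow
  rw [arcCongestion_add, second_leg, arcCongestion_fiberFlow]

theorem isMCFlow_boxFlow [Fintype V] [Fintype W] {R : V → V → Prop} {S : W → W → Prop} {c : ℝ}
    {g : V → V → V → V → ℝ} {f : W → W → W → W → ℝ}
    (hg : IsMCFlow R (fun _ _ => c) g) (hf : IsMCFlow S (fun _ _ => c) f) :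
    IsMCFlow (Prod.GameAdd R S) (fun _ _ => c) (boxFlow g f) := by
  obtain ⟨g_nonneg, g_supp, g_div⟩ := hg
  obtain ⟨f_nonneg, f_supp, f_div⟩ := hf
  refine ⟨fun s t x y => ?_, fun s t x y hxy => ?_, fun s t v => ?_⟩
  · exact add_nonneg (fiberFlow_nonneg (g_nonneg _ _) _ _ _)
      (fiberFlow_nonneg (f_nonneg _ _) _ _ _)
  · rw [Prod.gameAdd_iff]
    obtain h | h : fiberFlow s.2 (g s.1 t.1) x y ≠ 0 ∨
        fiberFlow t.1 (f s.2 t.2) x.swap y.swap ≠ 0 := by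
      by_contra! h
      exact hxy (by rw [boxFlow, h.1, h.2, add_zero])
    · obtain ⟨⟨hx, hy⟩, h⟩ := fiberFlow_ne_zero_iff.1 h
      exact .inl ⟨g_supp _ _ _ _ h, hx.trans hy.symm⟩
    · obtain ⟨⟨hx, hy⟩, h⟩ := fiberFlow_ne_zero_iff.1 h
      exact .inr ⟨f_supp _ _ _ _ h, hx.trans hy.symm⟩
  · -- The first leg ends at `(t.1, s.2)`, where the second begins.
    calc divergence (boxFlow g f s t) v
        = (if v.2 = s.2 then (if v.1 = s.1 then c else 0) - (if v.1 = t.1 then c else 0) else 0) +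
          (if v.1 = t.1 then (if v.2 = s.2 then c else 0) - (if v.2 = t.2 then c else 0)
            else 0) := by
          rw [divergence_boxFlow, divergence, g_div, divergence, f_div]
      _ = _ := by
          simp only [Prod.ext_iff]
          grind

end BoxFlow

/-- For digraphs with arc relations `R` and `S`, `Prod.GameAdd R S` is the arc relation of their
Cartesian product. -/
theorem boxProd_uniform_flow_general {V W : Type*} [Fintype V] [Fintype W]
    (R : V → V → Prop) [Std.Irrefl R] (S : W → W → Prop) [Std.Irrefl S] (c ρ : ℝ)
    (g : V → V → V → V → ℝ) (hg : IsMCFlow R (fun _ _ => c) g)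
    (hgcong : ∀ x y : V, R x y → (∑ s, ∑ t, g s t x y) / (Fintype.card V : ℝ) ≤ ρ)
    (f : W → W → W → W → ℝ) (hf : IsMCFlow S (fun _ _ => c) f)
    (hfcong : ∀ x y : W, S x y → (∑ s, ∑ t, f s t x y) / (Fintype.card W : ℝ) ≤ ρ) :
    ∃ F : V × W → V × W → V × W → V × W → ℝ,
      IsMCFlow (Prod.GameAdd R S) (fun _ _ => c) F ∧
      ∀ x y : V × W, Prod.GameAdd R S x y →
        (∑ s, ∑ t, F s t x y) / (Fintype.card (V × W) : ℝ) ≤ ρ := by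
  refine ⟨boxFlow g f, isMCFlow_boxFlow hg hf, fun x y hxy => ?_⟩
  change arcCongestion (boxFlow g f) x y ≤ ρ
  rw [arcCongestion_boxFlow]
  obtain ⟨hR, heq⟩ | ⟨hS, heq⟩ := Prod.gameAdd_iff.1 hxy
  · rw [if_pos heq, if_neg (ne_of_irrefl hR), add_zero]
    exact hgcong _ _ hR
  · rw [if_neg (ne_of_irrefl hS), if_pos heq, zero_add]
    exact hfcong _ _ hS

/-- if finite connected graphs `G` and `H` admit uniform multicommodity
flows (one unit between every ordered pair of vertices) with congestion at most `ρ`,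
then the Cartesian product `G □ H` admits a uniform multicommodity flow with
congestion at most `ρ` (congestion of a flow: the maximum over arcs of the total flow
across the arc divided by the number of vertices). -/
theorem boxProd_uniform_flow {V W : Type*} [Fintype V] [Fintype W]
    (G : SimpleGraph V) (H : SimpleGraph W) (hG : G.Connected) (hH : H.Connected)
    (ρ : ℝ)
    (g : V → V → V → V → ℝ)
    (hg : IsMCFlow G.Adj (fun _ _ => 1) g)
    (hgcong : ∀ x y : V, G.Adj x y →
      (∑ s, ∑ t, g s t x y) / (Fintype.card V : ℝ) ≤ ρ)
    (f : W → W → W → W → ℝ)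
    (hf : IsMCFlow H.Adj (fun _ _ => 1) f)
    (hfcong : ∀ x y : W, H.Adj x y →
      (∑ s, ∑ t, f s t x y) / (Fintype.card W : ℝ) ≤ ρ) :
    ∃ F : V × W → V × W → V × W → V × W → ℝ,
      IsMCFlow (G.boxProd H).Adj (fun _ _ => 1) F ∧
      ∀ x y : V × W, (G.boxProd H).Adj x y →
        (∑ s, ∑ t, F s t x y) / (Fintype.card (V × W) : ℝ) ≤ ρ := by
  have := G.loopless
  have := H.loopless
  have adj_eq : (G.boxProd H).Adj = Prod.GameAdd G.Adj H.Adj := by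
    ext x y
    rw [SimpleGraph.boxProd_adj, Prod.gameAdd_iff]
  exact adj_eq ▸ boxProd_uniform_flow_general G.Adj H.Adj 1 ρ g hg hgcong f hf hfcong
end

section
/- For all integers k ≥ 3 and n ≥ 1, the generalized Catalan number C_{k,n} = (1/((k−2)n+1))·binom((k−1)n, n) satisfies e^{−1/6}·((k−2)/(k−1))·f(k,n) ≤ C_{k,n} ≤ e^{1/12}·f(k,n), where f(k,n) = (√(k−1) / (√(2π)·((k−2)n)^{3/2})) · ((k−1)^{(k−1)n} / (k−2)^{(k−2)n}). -/
/-!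
By Robbins' refinement of Stirling's formula, `n! = √(2πn) (n/e)ⁿ e^{θ}` with `0 ≤ θ ≤ 1/(12n)`, and
`θ` decreases as `n` grows. Dividing the estimates for `(a+b)!`, `a!` and `b!`, the powers of `e`
cancel and `binom(a+b, a)` equals its Stirling approximation times `e^{θ(a+b) - θ(a) - θ(b)}`; the
exponent is at most `0` because `θ(a+b) ≤ θ(a)` and `θ(b) ≥ 0`, and at least `-1/(12a) - 1/(12b)`.
For `a = n` and `b = (k-2)n` the Stirling approximation is `(k-2)n · f(k,n)`, so that passing from
the binomial coefficient to `C_{k,n}` costs only the factor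
`(k-2)n / ((k-2)n+1) ∈ [(k-2)/(k-1), 1]`.
-/

/-- The generalized Catalan number `C_{k,n} = (1/((k-2)n+1))·binom((k-1)n, n)`,
which counts the `k`-angulations of the convex `((k-2)n+2)`-gon (the natural-number
division is exact). -/
def genCatalan (k n : ℕ) : ℕ :=
  Nat.choose ((k - 1) * n) n / ((k - 2) * n + 1)

/-- The Stirling-type approximation
`f(k,n) = (√(k-1) / (√(2π)·((k-2)n)^{3/2})) · ((k-1)^{(k-1)n} / (k-2)^{(k-2)n})`. -/
noncomputable def genCatalanApprox (k n : ℕ) : ℝ :=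
  (Real.sqrt ((k : ℝ) - 1) /
      (Real.sqrt (2 * Real.pi) * (((k : ℝ) - 2) * (n : ℝ)) ^ (3 / 2 : ℝ))) *
    (((k : ℝ) - 1) ^ ((k - 1) * n) / ((k : ℝ) - 2) ^ ((k - 2) * n))

open Filter Real Stirling

theorem stirlingSeq_pos {n : ℕ} (hn : n ≠ 0) : 0 < stirlingSeq n :=
  (sqrt_pos.mpr pi_pos).trans_le (sqrt_pi_le_stirlingSeq hn)

theorem stirlingSeq_antitoneOn : AntitoneOn stirlingSeq {n | n ≠ 0} := by
  intro m hm n hn hmn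
  obtain ⟨i, rfl⟩ := Nat.exists_eq_succ_of_ne_zero hm
  obtain ⟨j, rfl⟩ := Nat.exists_eq_succ_of_ne_zero hn
  exact stirlingSeq'_antitone (Nat.succ_le_succ_iff.mp hmn)

theorem monotone_log_stirlingSeq_succ_sub :
    Monotone fun n : ℕ ↦ log (stirlingSeq (n + 1)) - 1 / (12 * (n + 1 : ℝ)) := by
  refine monotone_nat_of_le_succ fun n ↦ ?_
  have hstep := log_stirlingSeq_sdiff_le (n + 1)
  have htelescope : 1 / (12 * ((n + 1 : ℕ) : ℝ) * ((n + 1 : ℕ) + 1)) =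
      1 / (12 * (n + 1 : ℝ)) - 1 / (12 * ((n + 1 : ℕ) + 1)) := by
    push_cast
    field
  linarith

theorem stirlingSeq_le_sqrt_pi_mul_exp {n : ℕ} (hn : n ≠ 0) :
    stirlingSeq n ≤ √π * exp (1 / (12 * n)) := by
  obtain ⟨m, rfl⟩ := Nat.exists_eq_succ_of_ne_zero hn
  have hlog : Tendsto (fun n : ℕ ↦ log (stirlingSeq (n + 1))) atTop (nhds (log √π)) :=
    (tendsto_stirlingSeq_sqrt_pi.comp (tendsto_add_atTop_nat 1)).log (by positivity)
  have hcorr : Tendsto (fun n : ℕ ↦ 1 / (12 * (n + 1 : ℝ))) atTop (nhds 0) := by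
    simpa [div_eq_mul_inv] using tendsto_one_div_add_atTop_nhds_zero_nat.div_const (12 : ℝ)
  have hle : log (stirlingSeq (m + 1)) - 1 / (12 * (m + 1 : ℝ)) ≤ log √π := by
    simpa using monotone_log_stirlingSeq_succ_sub.ge_of_tendsto (hlog.sub hcorr) m
  rw [← log_le_log_iff (stirlingSeq_pos hn) (by positivity),
    log_mul (by positivity) (by positivity), log_exp]
  push_cast
  linarith

theorem factorial_eq_stirlingSeq_mul {n : ℕ} (hn : n ≠ 0) :
    (n.factorial : ℝ) = stirlingSeq n * (√(2 * n) * (n / exp 1) ^ n) := by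
  rw [stirlingSeq, div_mul_cancel₀ _ (by positivity)]

section Choose

/-- The approximation of the binomial coefficient `(a + b).choose a` obtained by replacing each
factorial `n!` in `(a + b)! / (a! * b!)` by `√(2πn) (n/e)ⁿ`; for `a = 0` or `b = 0` its value is the
junk value `0`. -/
noncomputable def stirlingChoose (a b : ℕ) : ℝ :=
  √((a + b) / (2 * π * a * b)) * ((a + b) ^ (a + b) / (a ^ a * b ^ b))

theorem stirlingChoose_nonneg (a b : ℕ) : 0 ≤ stirlingChoose a b := by
  unfold stirlingChoose
  positivity

variable {a b : ℕ}

theorem choose_eq_stirlingSeq_mul_stirlingChoose (ha : a ≠ 0) (hb : b ≠ 0) :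
    ((a + b).choose a : ℝ) =
      √π * stirlingSeq (a + b) / (stirlingSeq a * stirlingSeq b) * stirlingChoose a b := by
  have hroots : √(2 * (a + b)) / (√(2 * a) * √(2 * b)) = √π * √((a + b) / (2 * π * a * b)) := by
    rw [← sqrt_mul (by positivity), ← sqrt_div (by positivity), ← sqrt_mul pi_pos.le]
    congr 1
    field
  have hpows : ((a + b) / exp 1) ^ (a + b) / ((a / exp 1) ^ a * (b / exp 1) ^ b) =
      ((a + b) ^ (a + b) / (a ^ a * b ^ b) : ℝ) := by
    simp only [div_pow, pow_add (exp 1)]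
    field
  rw [Nat.cast_add_choose, factorial_eq_stirlingSeq_mul (by lia : a + b ≠ 0),
    factorial_eq_stirlingSeq_mul ha, factorial_eq_stirlingSeq_mul hb, stirlingChoose, ← hpows]
  push_cast
  calc
    _ = stirlingSeq (a + b) / (stirlingSeq a * stirlingSeq b) *
          (√(2 * (a + b)) / (√(2 * a) * √(2 * b))) *
          (((a + b) / exp 1) ^ (a + b) / ((a / exp 1) ^ a * (b / exp 1) ^ b)) := by ring
    _ = _ := by
      rw [hroots]
      ring

theorem choose_le_stirlingChoose (ha : a ≠ 0) (hb : b ≠ 0) :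
    ((a + b).choose a : ℝ) ≤ stirlingChoose a b := by
  have hSa := stirlingSeq_pos ha
  have hSb := stirlingSeq_pos hb
  have hSab : stirlingSeq (a + b) ≤ stirlingSeq a :=
    stirlingSeq_antitoneOn ha (by simp [ha]) (Nat.le_add_right a b)
  rw [choose_eq_stirlingSeq_mul_stirlingChoose ha hb]
  refine mul_le_of_le_one_left (stirlingChoose_nonneg a b) ?_
  rw [div_le_one (by positivity), mul_comm]
  exact mul_le_mul hSab (sqrt_pi_le_stirlingSeq hb) (by positivity) hSa.le

theorem exp_neg_mul_stirlingChoose_le_choose (ha : a ≠ 0) (hb : b ≠ 0) :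
    exp (-(1 / (12 * a) + 1 / (12 * b))) * stirlingChoose a b ≤ ((a + b).choose a : ℝ) := by
  have hSa := stirlingSeq_pos ha
  have hSb := stirlingSeq_pos hb
  rw [choose_eq_stirlingSeq_mul_stirlingChoose ha hb]
  refine mul_le_mul_of_nonneg_right ?_ (stirlingChoose_nonneg a b)
  rw [le_div_iff₀ (by positivity)]
  calc
    _ ≤ exp (-(1 / (12 * a) + 1 / (12 * b))) *
          ((√π * exp (1 / (12 * a))) * (√π * exp (1 / (12 * b)))) := by
      gcongr
      exacts [stirlingSeq_le_sqrt_pi_mul_exp ha, stirlingSeq_le_sqrt_pi_mul_exp hb]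
    _ = √π * √π := by
      rw [exp_neg, exp_add]
      field
    _ ≤ √π * stirlingSeq (a + b) := by
      gcongr
      exact sqrt_pi_le_stirlingSeq (by lia)

theorem succ_dvd_choose_of_coprime (h : (b + 1).Coprime a) : b + 1 ∣ (a + b).choose a := by
  have habsorb : (a + b).choose (b + 1) * (b + 1) = (a + b).choose a * a := by
    rw [Nat.choose_succ_right_eq, Nat.add_sub_cancel, Nat.choose_symm_add]
  exact h.dvd_of_dvd_mul_right (Dvd.intro_left _ habsorb)

end Choose

section GenCatalan

theorem cast_genCatalan_add_two (m n : ℕ) :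
    (genCatalan (m + 2) n : ℝ) = ((n + m * n).choose n : ℝ) / (m * n + 1) := by
  have hdvd : m * n + 1 ∣ (n + m * n).choose n := succ_dvd_choose_of_coprime (by simp)
  have hsize : (m + 2 - 1) * n = n + m * n := by
    rw [Nat.add_succ_sub_one]
    ring
  rw [genCatalan, hsize, Nat.add_sub_cancel, Nat.cast_div hdvd (by positivity)]
  push_cast
  rfl

variable {m n : ℕ}

theorem genCatalanApprox_add_two (hm : m ≠ 0) (hn : n ≠ 0) :
    genCatalanApprox (m + 2) n = stirlingChoose n (m * n) / (m * n) := by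
  have hroots : √(m + 1) / (√(2 * π) * (m * n) ^ (3 / 2 : ℝ)) =
      √((n + m * n) / (2 * π * n * (m * n))) / (m * n : ℝ) := by
    have hquot : ((n + m * n) / (2 * π * n * (m * n)) : ℝ) = (m + 1) / (2 * π * (m * n)) := by
      field
    have hrpow : (m * n : ℝ) ^ (3 / 2 : ℝ) = m * n * √(m * n) := by
      rw [sqrt_eq_rpow, ← rpow_one_add' (by positivity) (by norm_num)]
      norm_num
    rw [hquot, hrpow, sqrt_div (by positivity),
      sqrt_mul (by positivity : (0 : ℝ) ≤ 2 * π) (m * n)]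
    ring
  have hpows : ((m + 1) ^ ((m + 1) * n) / m ^ (m * n) : ℝ) =
      (n + m * n) ^ (n + m * n) / (n ^ n * (m * n) ^ (m * n)) := by
    rw [show (n + m * n : ℝ) = (m + 1) * n by ring, show (m + 1) * n = n + m * n by ring,
      mul_pow, mul_pow, pow_add (n : ℝ)]
    field
  have hk₁ : ((m + 2 : ℕ) : ℝ) - 1 = m + 1 := by
    push_cast
    ring
  have hk₂ : ((m + 2 : ℕ) : ℝ) - 2 = m := by
    push_cast
    ring
  rw [genCatalanApprox, stirlingChoose, hk₁, hk₂, Nat.add_succ_sub_one, Nat.add_sub_cancel, hroots,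
    hpows]
  push_cast
  ring

theorem genCatalan_add_two_le_genCatalanApprox (hm : m ≠ 0) (hn : n ≠ 0) :
    (genCatalan (m + 2) n : ℝ) ≤ genCatalanApprox (m + 2) n := by
  have hmn : m * n ≠ 0 := mul_ne_zero hm hn
  rw [cast_genCatalan_add_two, genCatalanApprox_add_two hm hn]
  gcongr
  · exact stirlingChoose_nonneg n (m * n)
  · exact choose_le_stirlingChoose hn hmn
  · linarith

theorem exp_neg_mul_genCatalanApprox_le_genCatalan_add_two (hm : m ≠ 0) (hn : n ≠ 0) :
    exp (-(1 / (12 * n) + 1 / (12 * (m * n)))) * (m * n / (m * n + 1)) *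
      genCatalanApprox (m + 2) n ≤ (genCatalan (m + 2) n : ℝ) := by
  have hchoose := exp_neg_mul_stirlingChoose_le_choose hn (mul_ne_zero hm hn)
  push_cast at hchoose
  rw [cast_genCatalan_add_two, genCatalanApprox_add_two hm hn]
  calc
    _ = exp (-(1 / (12 * n) + 1 / (12 * (m * n)))) * stirlingChoose n (m * n) / (m * n + 1) := by
      field
    _ ≤ _ := by gcongr

end GenCatalan

/-- for all integers `k ≥ 3` and `n ≥ 1`,
`e^{-1/6}·((k-2)/(k-1))·f(k,n) ≤ C_{k,n} ≤ e^{1/12}·f(k,n)`. -/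
theorem genCatalan_bounds (k n : ℕ) (hk : 3 ≤ k) (hn : 1 ≤ n) :
    Real.exp (-(1 / 6)) * (((k : ℝ) - 2) / ((k : ℝ) - 1)) * genCatalanApprox k n ≤
        (genCatalan k n : ℝ) ∧
      (genCatalan k n : ℝ) ≤ Real.exp (1 / 12) * genCatalanApprox k n := by
  obtain ⟨m, rfl⟩ : ∃ m, k = m + 2 := ⟨k - 2, by lia⟩
  have hm : 1 ≤ m := by lia
  have hm₀ : m ≠ 0 := by lia
  have hn₀ : n ≠ 0 := by lia
  have hupper := genCatalan_add_two_le_genCatalanApprox hm₀ hn₀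
  have hf : 0 ≤ genCatalanApprox (m + 2) n := (Nat.cast_nonneg _).trans hupper
  have hn' : (1 : ℝ) ≤ n := by exact_mod_cast hn
  have hmn : (1 : ℝ) ≤ m * n := by exact_mod_cast Nat.mul_pos hm hn
  constructor
  · refine le_trans ?_ (exp_neg_mul_genCatalanApprox_le_genCatalan_add_two hm₀ hn₀)
    have hexponent : 1 / (12 * n) + 1 / (12 * (m * n)) ≤ (1 / 6 : ℝ) := by
      calc
        _ ≤ 1 / (12 * 1) + 1 / (12 * 1 : ℝ) := by gcongr
        _ = 1 / 6 := by norm_num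
    have hratio : ((m + 2 : ℕ) - 2 : ℝ) / ((m + 2 : ℕ) - 1) ≤ m * n / (m * n + 1) := by
      push_cast
      rw [div_le_div_iff₀ (by linarith) (by linarith)]
      nlinarith
    gcongr
    exact div_nonneg (by simp) (by push_cast; linarith)
  · exact hupper.trans (le_mul_of_one_le_left hf (one_le_exp (by norm_num)))
end

section
/- For every integer k ≥ 3 and every n ≥ 1, the k-angulation flip graph K_{k,(k−2)n+2} on the k-angulations of the convex ((k−2)n+2)-gon is connected. -/
open Finset

/-- `e` is an edge of the dissection given by the diagonal set `t`:
a polygon side or a diagonal of `t`. -/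
def EdgeOfD {m : ℕ} (t : Finset (Sym2 (Fin m))) (e : Sym2 (Fin m)) : Prop :=
  IsSide e ∨ e ∈ t

/-- `b` is the cyclic successor of `a` among the elements of `F`. -/
def NextIn {m : ℕ} (F : Finset (Fin m)) (a b : Fin m) : Prop :=
  a ∈ F ∧ b ∈ F ∧ a ≠ b ∧ ∀ x ∈ F, ¬ CycBtw a b x

/-- `F` is the vertex set of a cell (face) of the dissection of the convex `m`-gon by the
pairwise non-crossing diagonal set `t`: every pair of cyclically consecutive vertices of
`F` is joined by an edge of the dissection, and no diagonal of `t` joins two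
non-consecutive vertices of `F`. -/
def IsFaceSet {m : ℕ} (t : Finset (Sym2 (Fin m))) (F : Finset (Fin m)) : Prop :=
  3 ≤ F.card ∧
  (∀ a b : Fin m, NextIn F a b → EdgeOfD t s(a, b)) ∧
  (∀ e ∈ t, ∀ a b : Fin m, e = s(a, b) → a ∈ F → b ∈ F → NextIn F a b ∨ NextIn F b a)

/-- `t` is a `k`-angulation of the convex `((k-2)n+2)`-gon: a set of `n - 1` pairwise
non-crossing diagonals subdividing the polygon into cells that are all `k`-gons. -/
def IsKAngulation (k n : ℕ) (t : Finset (Sym2 (Fin ((k - 2) * n + 2)))) : Prop :=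
  (∀ e ∈ t, IsDiagonal e) ∧
  (∀ e ∈ t, ∀ f ∈ t, ¬ Crosses e f) ∧
  t.card = n - 1 ∧
  (∀ F : Finset (Fin ((k - 2) * n + 2)), IsFaceSet t F → F.card = k)

/-- The type of `k`-angulations of the convex `((k-2)n+2)`-gon. -/
def KAngulation (k n : ℕ) : Type :=
  {t : Finset (Sym2 (Fin ((k - 2) * n + 2))) // IsKAngulation k n t}

instance (k n : ℕ) : DecidableEq (KAngulation k n) := fun a b =>
  decidable_of_iff (a.val = b.val) Subtype.ext_iff.symm

noncomputable instance (k n : ℕ) : Fintype (KAngulation k n) := by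
  classical exact Subtype.fintype _

/-- The `k`-angulation flip graph `K_{k,(k-2)n+2}`: vertices are the `k`-angulations of
the convex `((k-2)n+2)`-gon, two of them adjacent iff they differ in exactly one
diagonal (a flip). -/
def kAngGraph (k n : ℕ) : SimpleGraph (KAngulation k n) where
  Adj s t := (s.val \ t.val).card = 1 ∧ (t.val \ s.val).card = 1
  symm := ⟨fun s t h => ⟨h.2, h.1⟩⟩
  loopless := ⟨fun s h => by simp at h⟩

/-!
Write `q = k - 2` and order the vertices `0 < 1 < ⋯ < q * n + 1`. The cell just below an edge
`ab` with `a < b` runs from `a` up to `b`, and every cell of a dissection arises from exactly one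
edge `ab` with `a + 1 < b`. Every vertex strictly between `0` and `q * n + 1` is an inner vertex of
exactly one cell, so the numbers of inner vertices of the cells add up to `q * n`. Hence `n - 1`
pairwise non-crossing diagonals form a `k`-angulation iff every diagonal `ab` with `a < b`
satisfies `b ≡ a + 1` modulo `q`.

Along a cell of a `k`-angulation the residues modulo `q` therefore increase by `1`, so each cell has
an inner vertex `c ≡ 1`. If `ab` is a longest diagonal missing the vertex `0`, then exchanging it
for `0c`, where `c` is taken in the cell below `ab`, is a flip, and it increases the number of
diagonals at `0`. The process stops at the unique `k`-angulation all of whose diagonals contain `0`.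
-/

section General

lemma connected_of_exists_adj_lt {V : Type*} {G : SimpleGraph V} (v₀ : V) (μ : V → ℕ)
    (h : ∀ v, v ≠ v₀ → ∃ w, G.Adj v w ∧ μ w < μ v) : G.Connected := by
  refine G.connected_iff_exists_forall_reachable.2 ⟨v₀, fun v => ?_⟩
  induction hN : μ v using Nat.strong_induction_on generalizing v with
  | _ N ih =>
    rcases eq_or_ne v v₀ with rfl | hv
    · rfl
    · obtain ⟨w, hvw, hlt⟩ := h v hv
      exact (ih _ (hN ▸ hlt) w rfl).trans hvw.symm.reachable

lemma card_sdiff_insert_erase {α : Type*} [DecidableEq α] {s : Finset α} {a b : α}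
    (ha : a ∈ s) (hb : b ∉ s) : #(s \ insert b (s.erase a)) = 1 := by
  rw [sdiff_insert, sdiff_erase_self ha, erase_eq_of_notMem (by grind), card_singleton]

lemma card_insert_erase_sdiff {α : Type*} [DecidableEq α] {s : Finset α} {a b : α}
    (hb : b ∉ s) : #(insert b (s.erase a) \ s) = 1 := by
  rw [insert_sdiff_of_notMem _ hb, sdiff_eq_empty_iff_subset.2 (erase_subset a s), insert_empty_eq,
    card_singleton]

lemma exists_lt_eq_mk {α : Type*} [LinearOrder α] {e : Sym2 α} (he : ¬ e.IsDiag) :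
    ∃ a b, a < b ∧ e = s(a, b) := by
  induction e using Sym2.ind with
  | _ a b =>
    rcases lt_trichotomy a b with h | rfl | h
    · exact ⟨a, b, h, rfl⟩
    · simp at he
    · exact ⟨b, a, h, Sym2.eq_swap⟩

lemma mk_eq_mk_iff_of_lt {α : Type*} [LinearOrder α] {a b c d : α} (hab : a < b) (hcd : c < d) :
    s(a, b) = s(c, d) ↔ a = c ∧ b = d := by
  rw [Sym2.eq_iff, or_iff_left]
  rintro ⟨rfl, rfl⟩
  exact hab.not_gt hcd

variable {α R : Type*} [LinearOrder α] [AddMonoidWithOne R] {F : Finset α} {r : α → R} {a b : α}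

lemma apply_orderEmbOfFin
    (hr : ∀ x ∈ F, ∀ y ∈ F, x < y → (∀ z ∈ F, ¬ (x < z ∧ z < y)) → r y = r x + 1)
    (ha : IsLeast (F : Set α) a) (i : ℕ) (hi : i < #F) :
    r (F.orderEmbOfFin rfl ⟨i, hi⟩) = r a + i := by
  induction i with
  | zero => simp [orderEmbOfFin_zero, (F.isLeast_min' ⟨a, ha.1⟩).unique ha]
  | succ i ih =>
    rw [hr (F.orderEmbOfFin rfl ⟨i, by omega⟩) (F.orderEmbOfFin_mem _ _) _
      (F.orderEmbOfFin_mem _ _) (by simp) ?_, ih, Nat.cast_succ, add_assoc]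
    intro z hz
    obtain ⟨j, rfl⟩ : z ∈ Set.range (F.orderEmbOfFin rfl) := by simpa using hz
    simp only [OrderEmbedding.lt_iff_lt, Fin.lt_def]
    omega

lemma apply_greatest_add_one
    (hr : ∀ x ∈ F, ∀ y ∈ F, x < y → (∀ z ∈ F, ¬ (x < z ∧ z < y)) → r y = r x + 1)
    (ha : IsLeast (F : Set α) a) (hb : IsGreatest (F : Set α) b) : r b + 1 = r a + #F := by
  have hF : 0 < #F := card_pos.2 ⟨a, ha.1⟩
  have hlast := apply_orderEmbOfFin hr ha (#F - 1) (by omega)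
  rw [orderEmbOfFin_last rfl hF, (F.isGreatest_max' ⟨a, ha.1⟩).unique hb] at hlast
  rw [hlast, add_assoc, ← Nat.cast_succ, Nat.succ_eq_add_one, Nat.sub_add_cancel hF]

lemma exists_between_apply_eq
    (hr : ∀ x ∈ F, ∀ y ∈ F, x < y → (∀ z ∈ F, ¬ (x < z ∧ z < y)) → r y = r x + 1)
    (ha : IsLeast (F : Set α) a) (hb : IsGreatest (F : Set α) b) {i : ℕ} (hi₀ : 0 < i)
    (hi : i + 1 < #F) : ∃ c ∈ F, a < c ∧ c < b ∧ r c = r a + i := by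
  have hF : 0 < #F := by omega
  refine ⟨_, F.orderEmbOfFin_mem rfl ⟨i, by omega⟩, ?_, ?_, apply_orderEmbOfFin hr ha i _⟩
  · rw [← (F.isLeast_min' ⟨a, ha.1⟩).unique ha, ← orderEmbOfFin_zero rfl hF]
    simpa using hi₀
  · rw [← (F.isGreatest_max' ⟨a, ha.1⟩).unique hb, ← orderEmbOfFin_last rfl hF]
    simp only [OrderEmbedding.lt_iff_lt, Fin.mk_lt_mk]
    omega

end General

section Polygon

variable {m : ℕ} {F : Finset (Fin (m + 2))} {a b c d x : Fin (m + 2)}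

lemma cycBtw_iff_of_lt_s16 (hab : a < b) : CycBtw a b x ↔ a < x ∧ x < b := by
  rcases le_or_gt a x with h | h
  · rw [CycBtw, Fin.sub_val_of_le h, Fin.sub_val_of_le hab.le]
    omega
  · rw [CycBtw, Fin.coe_sub_iff_lt.2 h, Fin.sub_val_of_le hab.le]
    omega

lemma cycBtw_swap_iff_of_lt (hab : a < b) : CycBtw b a x ↔ x < a ∨ b < x := by
  rcases le_or_gt b x with h | h
  · rw [CycBtw, Fin.sub_val_of_le h, Fin.coe_sub_iff_lt.2 hab]
    omega
  · rw [CycBtw, Fin.coe_sub_iff_lt.2 h, Fin.coe_sub_iff_lt.2 hab]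
    omega

lemma polyAdj_iff_of_lt (hab : a < b) :
    PolyAdj a b ↔ b.val = a.val + 1 ∨ a.val = 0 ∧ b.val = m + 1 := by
  rw [PolyAdj, Fin.sub_val_of_le hab.le, Fin.coe_sub_iff_lt.2 hab]
  omega

lemma polyAdj_comm : PolyAdj a b ↔ PolyAdj b a := or_comm

lemma isSide_mk_iff_s16 : IsSide s(a, b) ↔ PolyAdj a b := by
  refine ⟨?_, fun h => ⟨a, b, rfl, h⟩⟩
  rintro ⟨c, d, h, hcd⟩
  rcases Sym2.eq_iff.1 h with ⟨rfl, rfl⟩ | ⟨rfl, rfl⟩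
  exacts [hcd, polyAdj_comm.1 hcd]

lemma isDiagonal_mk_iff_of_lt (hab : a < b) :
    IsDiagonal s(a, b) ↔ a.val + 1 < b.val ∧ ¬ (a.val = 0 ∧ b.val = m + 1) := by
  have hside : IsDiagonal s(a, b) ↔ ¬ IsSide s(a, b) := by
    simp [IsDiagonal, IsSide, hab.ne]
  rw [hside, isSide_mk_iff_s16, polyAdj_iff_of_lt hab]
  omega

lemma crosses_iff {e f : Sym2 (Fin (m + 2))} :
    Crosses e f ↔ ∀ a b, e = s(a, b) → ∃ c d, f = s(c, d) ∧
      (CycBtw a b c ∧ ¬ CycBtw a b d ∨ CycBtw a b d ∧ ¬ CycBtw a b c) := Iff.rfl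

lemma crosses_mk_iff_of_lt (hab : a < b) (hcd : c < d) :
    Crosses s(a, b) s(c, d) ↔ (a < c ∧ c < b ∧ b < d) ∨ (c < a ∧ a < d ∧ d < b) := by
  rw [crosses_iff]
  constructor
  · intro h
    obtain ⟨c₁, d₁, h₁, hx₁⟩ := h a b rfl
    obtain ⟨c₂, d₂, h₂, hx₂⟩ := h b a Sym2.eq_swap
    rw [cycBtw_iff_of_lt_s16 hab, cycBtw_iff_of_lt_s16 hab] at hx₁
    rw [cycBtw_swap_iff_of_lt hab, cycBtw_swap_iff_of_lt hab] at hx₂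
    rcases Sym2.eq_iff.1 h₁ with ⟨rfl, rfl⟩ | ⟨rfl, rfl⟩ <;>
    rcases Sym2.eq_iff.1 h₂ with ⟨rfl, rfl⟩ | ⟨rfl, rfl⟩ <;> omega
  · intro h a' b' hab'
    refine ⟨c, d, rfl, ?_⟩
    rcases Sym2.eq_iff.1 hab' with ⟨rfl, rfl⟩ | ⟨rfl, rfl⟩ <;>
    simp only [cycBtw_iff_of_lt_s16 hab, cycBtw_swap_iff_of_lt hab] <;> omega

lemma nextIn_iff_of_lt (hab : a < b) :
    NextIn F a b ↔ a ∈ F ∧ b ∈ F ∧ ∀ x ∈ F, ¬ (a < x ∧ x < b) := by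
  simp only [NextIn, cycBtw_iff_of_lt_s16 hab, ne_eq, hab.ne, not_false_eq_true, true_and]

lemma nextIn_swap_iff_of_lt (hab : a < b) :
    NextIn F b a ↔ b ∈ F ∧ a ∈ F ∧ ∀ x ∈ F, a ≤ x ∧ x ≤ b := by
  simp only [NextIn, cycBtw_swap_iff_of_lt hab, ne_eq, hab.ne', not_false_eq_true, true_and,
    not_or, not_lt]

lemma exists_nextIn_of_notMem (hc : c ∉ F) (ha : a ∈ F) (hb : b ∈ F) (hac : a < c) (hcb : c < b) :
    ∃ x y, a ≤ x ∧ x < c ∧ c < y ∧ y ≤ b ∧ NextIn F x y := by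
  obtain ⟨x, ⟨hx, hxc⟩, hxmax⟩ := (Set.toFinite {x | x ∈ F ∧ x < c}).exists_maximal ⟨a, ha, hac⟩
  obtain ⟨y, ⟨hy, hcy⟩, hymin⟩ := (Set.toFinite {y | y ∈ F ∧ c < y}).exists_minimal ⟨b, hb, hcb⟩
  have hax : a ≤ x := by
    by_contra! h
    exact h.not_ge (hxmax ⟨ha, hac⟩ h.le)
  have hyb : y ≤ b := by
    by_contra! h
    exact h.not_ge (hymin ⟨hb, hcb⟩ h.le)
  refine ⟨x, y, hax, hxc, hcy, hyb, (nextIn_iff_of_lt (hxc.trans hcy)).2 ⟨hx, hy, ?_⟩⟩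
  rintro z hz ⟨hxz, hzy⟩
  rcases lt_trichotomy z c with h | rfl | h
  · exact hxz.not_ge (hxmax ⟨hz, h⟩ hxz.le)
  · exact hc hz
  · exact hzy.not_ge (hymin ⟨hz, h⟩ hzy.le)

end Polygon

/-- A dissection of the convex `(m + 2)`-gon, given as its set of pairwise non-crossing
diagonals. -/
structure IsDissection {m : ℕ} (t : Finset (Sym2 (Fin (m + 2)))) : Prop where
  isDiagonal : ∀ e ∈ t, IsDiagonal e
  not_crosses : ∀ e ∈ t, ∀ f ∈ t, ¬ Crosses e f

/-- `ab` is an edge (side or diagonal) of the dissection `t`, written with its endpoints in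
increasing order. -/
def IsEdge {m : ℕ} (t : Finset (Sym2 (Fin (m + 2)))) (a b : Fin (m + 2)) : Prop :=
  a < b ∧ EdgeOfD t s(a, b)

section Edge

variable {m : ℕ} {t t' : Finset (Sym2 (Fin (m + 2)))} {a b c d : Fin (m + 2)}

lemma isEdge_iff :
    IsEdge t a b ↔ a < b ∧ (b.val = a.val + 1 ∨ a.val = 0 ∧ b.val = m + 1 ∨ s(a, b) ∈ t) := by
  refine and_congr_right fun hab => ?_
  rw [EdgeOfD, isSide_mk_iff_s16, polyAdj_iff_of_lt hab, or_assoc]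

lemma IsEdge.lt (h : IsEdge t a b) : a < b := h.1

lemma isEdge_of_mem (hab : a < b) (h : s(a, b) ∈ t) : IsEdge t a b := ⟨hab, .inr h⟩

lemma isEdge_of_val_eq_succ (h : b.val = a.val + 1) : IsEdge t a b :=
  isEdge_iff.2 ⟨by omega, .inl h⟩

lemma isEdge_zero_last : IsEdge t 0 (Fin.last (m + 1)) :=
  isEdge_iff.2 ⟨Fin.last_pos, .inr (.inl ⟨rfl, rfl⟩)⟩

namespace IsDissection

lemma exists_lt_of_mem (ht : IsDissection t) {e : Sym2 (Fin (m + 2))} (he : e ∈ t) :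
    ∃ a b, a < b ∧ e = s(a, b) :=
  exists_lt_eq_mk (ht.isDiagonal e he).1

lemma val_of_mem (ht : IsDissection t) (hab : a < b) (h : s(a, b) ∈ t) :
    a.val + 1 < b.val ∧ ¬ (a.val = 0 ∧ b.val = m + 1) :=
  (isDiagonal_mk_iff_of_lt hab).1 (ht.isDiagonal _ h)

lemma not_interleaved (ht : IsDissection t) (hab : IsEdge t a b) (hcd : IsEdge t c d) :
    ¬ (a < c ∧ c < b ∧ b < d) := by
  intro h
  obtain ⟨hab, hab' | hab' | habt⟩ := isEdge_iff.1 hab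
  · omega
  · omega
  obtain ⟨hcd, hcd' | hcd' | hcdt⟩ := isEdge_iff.1 hcd
  · omega
  · omega
  exact ht.not_crosses _ habt _ hcdt ((crosses_mk_iff_of_lt hab hcd).2 (.inl h))

lemma mono (ht : IsDissection t) (h : t' ⊆ t) : IsDissection t' :=
  ⟨fun e he => ht.isDiagonal e (h he), fun e he f hf => ht.not_crosses e (h he) f (h hf)⟩

lemma insert_mk (ht : IsDissection t) (hab : a < b) (hdiag : IsDiagonal s(a, b))
    (hcross : ∀ x y, x < y → s(x, y) ∈ t → ¬ Crosses s(a, b) s(x, y)) :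
    IsDissection (insert s(a, b) t) := by
  have hself : ¬ Crosses s(a, b) s(a, b) := by
    rw [crosses_mk_iff_of_lt hab hab]
    omega
  refine ⟨forall_mem_insert _ _ _ |>.2 ⟨hdiag, ht.isDiagonal⟩, fun e he f hf => ?_⟩
  rcases mem_insert.1 he with rfl | he <;> rcases mem_insert.1 hf with rfl | hf
  · exact hself
  · obtain ⟨x, y, hxy, rfl⟩ := ht.exists_lt_of_mem hf
    exact hcross x y hxy hf
  · obtain ⟨x, y, hxy, rfl⟩ := ht.exists_lt_of_mem he
    rw [crosses_mk_iff_of_lt hxy hab, or_comm, ← crosses_mk_iff_of_lt hab hxy]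
    exact hcross x y hxy he
  · exact ht.not_crosses e he f hf

end IsDissection

end Edge

open Classical in
/-- The vertices of the cell of the dissection `t` lying just below the edge `ab`, that is, on the
side of the vertices between `a` and `b`: a vertex `a ≤ c ≤ b` belongs to it unless some other edge
`xy` with `a ≤ x < c < y ≤ b` separates it from `ab`. -/
noncomputable def cell {m : ℕ} (t : Finset (Sym2 (Fin (m + 2)))) (a b : Fin (m + 2)) :
    Finset (Fin (m + 2)) :=
  {c | a ≤ c ∧ c ≤ b ∧
    ∀ x y, IsEdge t x y → a ≤ x → y ≤ b → x < c → c < y → x = a ∧ y = b}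

section Cell

variable {m : ℕ} {t : Finset (Sym2 (Fin (m + 2)))} {F : Finset (Fin (m + 2))}
  {a b a' b' c x y : Fin (m + 2)}

lemma mem_cell : c ∈ cell t a b ↔ a ≤ c ∧ c ≤ b ∧
    ∀ x y, IsEdge t x y → a ≤ x → y ≤ b → x < c → c < y → x = a ∧ y = b := by
  simp [cell]

lemma left_mem_cell (hab : a ≤ b) : a ∈ cell t a b := mem_cell.2 ⟨le_rfl, hab, by omega⟩

lemma right_mem_cell (hab : a ≤ b) : b ∈ cell t a b := mem_cell.2 ⟨hab, le_rfl, by omega⟩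

lemma isLeast_cell (hab : a ≤ b) : IsLeast (cell t a b : Set (Fin (m + 2))) a :=
  ⟨left_mem_cell hab, fun _ hc => (mem_cell.1 hc).1⟩

lemma isGreatest_cell (hab : a ≤ b) : IsGreatest (cell t a b : Set (Fin (m + 2))) b :=
  ⟨right_mem_cell hab, fun _ hc => (mem_cell.1 hc).2.1⟩

namespace IsDissection

lemma exists_isEdge_mem_cell (ht : IsDissection t) (hab : a.val + 1 < b.val)
    (hx : x ∈ cell t a b) (hxb : x < b) :
    ∃ y ∈ cell t a b, IsEdge t x y ∧ ¬ (x = a ∧ y = b) := by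
  obtain ⟨hax, -, hx⟩ := mem_cell.1 hx
  -- The next vertex of the cell is the farthest endpoint of an edge going up from `x`.
  obtain ⟨y, ⟨hxy, hyb, hne⟩, hmax⟩ :=
    (Set.toFinite {y | IsEdge t x y ∧ y ≤ b ∧ ¬ (x = a ∧ y = b)}).exists_maximal
      ⟨⟨x.val + 1, by omega⟩, isEdge_of_val_eq_succ rfl, by simp only [Fin.le_def]; omega,
        by simp only [Fin.ext_iff]; omega⟩
  have := hxy.lt
  refine ⟨y, mem_cell.2 ⟨by omega, hyb, fun u v huv hau hvb huy hyv => ?_⟩, hxy, hne⟩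
  rcases lt_trichotomy u x with hux | rfl | hxu
  · exact hx u v huv hau hvb hux (by omega)
  · by_contra hne'
    exact hyv.not_ge (hmax ⟨huv, hvb, hne'⟩ hyv.le)
  · exact absurd ⟨hxu, huy, hyv⟩ (ht.not_interleaved hxy huv)

lemma isEdge_of_consecutive_mem_cell (ht : IsDissection t) (hab : a.val + 1 < b.val)
    (hx : x ∈ cell t a b) (hy : y ∈ cell t a b) (hxy : x < y)
    (hcons : ∀ z ∈ cell t a b, ¬ (x < z ∧ z < y)) : IsEdge t x y := by
  have hx' := mem_cell.1 hx
  have hy' := mem_cell.1 hy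
  obtain ⟨z, hz, hxz, hne⟩ := ht.exists_isEdge_mem_cell hab hx (by omega)
  have hyz : ¬ y < z := fun h => hne (hy'.2.2 x z hxz hx'.1 (mem_cell.1 hz).2.1 hxy h)
  have hzy : ¬ z < y := fun h => hcons z hz ⟨hxz.lt, h⟩
  rwa [show y = z by omega]

lemma exists_mem_cell_between (ht : IsDissection t) (hab : a.val + 1 < b.val) :
    ∃ c ∈ cell t a b, a < c ∧ c < b := by
  obtain ⟨c, hc, hac, hne⟩ :=
    ht.exists_isEdge_mem_cell hab (left_mem_cell (by omega)) (by omega)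
  exact ⟨c, hc, hac.lt, lt_of_le_of_ne (mem_cell.1 hc).2.1 fun h => hne ⟨rfl, h⟩⟩

lemma two_lt_card_cell (ht : IsDissection t) (hab : a.val + 1 < b.val) : 2 < #(cell t a b) := by
  obtain ⟨c, hc, hac, hcb⟩ := ht.exists_mem_cell_between hab
  exact two_lt_card_iff.2 ⟨a, c, b, left_mem_cell (by omega), hc, right_mem_cell (by omega),
    hac.ne, (hac.trans hcb).ne, hcb.ne⟩

lemma isFaceSet_cell (ht : IsDissection t) (hE : IsEdge t a b) (hab : a.val + 1 < b.val) :
    IsFaceSet t (cell t a b) := by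
  refine ⟨ht.two_lt_card_cell hab, fun x y hxy => ?_, fun e he x y hexy hx hy => ?_⟩
  · rcases lt_or_gt_of_ne hxy.2.2.1 with hlt | hgt
    · obtain ⟨hx, hy, hcons⟩ := (nextIn_iff_of_lt hlt).1 hxy
      exact (ht.isEdge_of_consecutive_mem_cell hab hx hy hlt hcons).2
    · obtain ⟨hx, hy, hall⟩ := (nextIn_swap_iff_of_lt hgt).1 hxy
      have hya := (hall a (left_mem_cell hE.lt.le)).1
      have hbx := (hall b (right_mem_cell hE.lt.le)).2
      rw [le_antisymm (mem_cell.1 hx).2.1 hbx, le_antisymm hya (mem_cell.1 hy).1, Sym2.eq_swap]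
      exact hE.2
  · have key : ∀ {x y}, x < y → s(x, y) ∈ t → x ∈ cell t a b → y ∈ cell t a b →
        NextIn (cell t a b) x y ∨ NextIn (cell t a b) y x := by
      intro x y hxy hmem hx hy
      rw [nextIn_iff_of_lt hxy, nextIn_swap_iff_of_lt hxy]
      by_cases h : x = a ∧ y = b
      · obtain ⟨rfl, rfl⟩ := h
        exact .inr ⟨hy, hx, fun z hz => ⟨(mem_cell.1 hz).1, (mem_cell.1 hz).2.1⟩⟩
      · exact .inl ⟨hx, hy, fun z hz hxz => h ((mem_cell.1 hz).2.2 x y (isEdge_of_mem hxy hmem)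
          (mem_cell.1 hx).1 (mem_cell.1 hy).2.1 hxz.1 hxz.2)⟩
    subst hexy
    rcases lt_trichotomy x y with hlt | rfl | hgt
    · exact key hlt he hx hy
    · exact absurd rfl (ht.isDiagonal _ he).1
    · exact (key hgt (Sym2.eq_swap ▸ he) hy hx).symm

end IsDissection

lemma IsFaceSet.isEdge (hF : IsFaceSet t F) (h : NextIn F x y) (hxy : x < y) : IsEdge t x y :=
  ⟨hxy, hF.2.1 x y h⟩

lemma IsFaceSet.cell_subset (hF : IsFaceSet t F) (ha : IsLeast (F : Set (Fin (m + 2))) a)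
    (hb : IsGreatest (F : Set (Fin (m + 2))) b) : cell t a b ⊆ F := by
  intro c hc
  obtain ⟨hac, hcb, hc⟩ := mem_cell.1 hc
  by_contra hcF
  have hac' : a < c := hac.lt_of_ne fun h => hcF (h ▸ ha.1)
  have hcb' : c < b := hcb.lt_of_ne fun h => hcF (h ▸ hb.1)
  obtain ⟨x, y, hax, hxc, hcy, hyb, hxy⟩ := exists_nextIn_of_notMem hcF ha.1 hb.1 hac' hcb'
  obtain ⟨rfl, rfl⟩ := hc x y (hF.isEdge hxy (hxc.trans hcy)) hax hyb hxc hcy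
  have hsub : F ⊆ {x, y} := fun z hz => by
    have := ((nextIn_iff_of_lt (hxc.trans hcy)).1 hxy).2.2 z hz
    have := ha.2 hz
    have := hb.2 hz
    rw [mem_insert, mem_singleton]
    omega
  exact absurd (hF.1.trans ((card_le_card hsub).trans card_le_two)) (by norm_num)

lemma IsFaceSet.subset_cell (hF : IsFaceSet t F) (ht : IsDissection t)
    (ha : IsLeast (F : Set (Fin (m + 2))) a) (hb : IsGreatest (F : Set (Fin (m + 2))) b) :
    F ⊆ cell t a b := by
  intro c hc
  refine mem_cell.2 ⟨ha.2 hc, hb.2 hc, fun x y hxy hax hyb hxc hcy => ?_⟩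
  by_cases hx : x ∈ F
  · by_cases hy : y ∈ F
    · obtain ⟨-, h | h | hmem⟩ := isEdge_iff.1 hxy
      · omega
      · omega
      rcases hF.2.2 _ hmem x y rfl hx hy with h | h
      · exact absurd ⟨hxc, hcy⟩ (((nextIn_iff_of_lt hxy.lt).1 h).2.2 c hc)
      · have hall := ((nextIn_swap_iff_of_lt hxy.lt).1 h).2.2
        exact ⟨hax.antisymm' (hall a ha.1).1, hyb.antisymm (hall b hb.1).2⟩
    · have hyb' : y < b := hyb.lt_of_ne fun h => hy (h ▸ hb.1)
      obtain ⟨u, v, hcu, huy, hyv, -, huv⟩ := exists_nextIn_of_notMem hy hc hb.1 hcy hyb'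
      exact absurd ⟨hxc.trans_le hcu, huy, hyv⟩
        (ht.not_interleaved hxy (hF.isEdge huv (huy.trans hyv)))
  · have hax' : a < x := hax.lt_of_ne fun h => hx (h ▸ ha.1)
    obtain ⟨u, v, -, hux, hxv, hvc, huv⟩ := exists_nextIn_of_notMem hx ha.1 hc hax' hxc
    exact absurd ⟨hux, hxv, hvc.trans_lt hcy⟩
      (ht.not_interleaved (hF.isEdge huv (hux.trans hxv)) hxy)

lemma IsDissection.isFaceSet_iff (ht : IsDissection t) :
    IsFaceSet t F ↔ ∃ a b, IsEdge t a b ∧ a.val + 1 < b.val ∧ F = cell t a b := by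
  constructor
  · intro hF
    have hne : F.Nonempty := card_pos.1 (by have := hF.1; omega)
    have ha := F.isLeast_min' hne
    have hb := F.isGreatest_max' hne
    have heq : F = cell t (F.min' hne) (F.max' hne) :=
      (hF.subset_cell ht ha hb).antisymm (hF.cell_subset ha hb)
    generalize F.min' hne = a at *
    generalize F.max' hne = b at *
    have hcard : #F ≤ b.val + 1 - a.val := by
      rw [← Fin.card_Icc]
      exact card_le_card fun x hx => mem_Icc.2 ⟨ha.2 hx, hb.2 hx⟩
    have hlt : a.val + 1 < b.val := by have := hF.1; omega
    have hnext : NextIn F b a := (nextIn_swap_iff_of_lt (by omega)).2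
      ⟨hb.1, ha.1, fun x hx => ⟨ha.2 hx, hb.2 hx⟩⟩
    exact ⟨a, b, ⟨by omega, Sym2.eq_swap ▸ hF.2.1 b a hnext⟩, hlt, heq⟩
  · rintro ⟨a, b, hE, hab, rfl⟩
    exact ht.isFaceSet_cell hE hab

lemma IsDissection.eq_of_mem_cell (ht : IsDissection t) (hab : IsEdge t a b)
    (hab' : IsEdge t a' b') (hc : c ∈ cell t a b) (hc' : c ∈ cell t a' b')
    (hac : a < c) (hcb : c < b) (hac' : a' < c) (hcb' : c < b') : a = a' ∧ b = b' := by
  have h₁ := ht.not_interleaved hab hab'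
  have h₂ := ht.not_interleaved hab' hab
  have h₃ := (mem_cell.1 hc).2.2 a' b' hab'
  have h₄ := (mem_cell.1 hc').2.2 a b hab
  omega

lemma exists_isEdge_mem_cell_between (h₀ : 0 < c) (h₁ : c < Fin.last (m + 1)) :
    ∃ a b, IsEdge t a b ∧ a < c ∧ c < b ∧ c ∈ cell t a b := by
  -- A shortest edge above `c`.
  obtain ⟨⟨a, b⟩, ⟨hab, hac, hcb⟩, hmin⟩ :=
    (Set.toFinite {p : Fin (m + 2) × Fin (m + 2) | IsEdge t p.1 p.2 ∧ p.1 < c ∧ c < p.2}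
      ).exists_minimalFor (fun p => p.2.val - p.1.val) _
        ⟨(0, Fin.last (m + 1)), isEdge_zero_last, h₀, h₁⟩
  refine ⟨a, b, hab, hac, hcb, mem_cell.2 ⟨hac.le, hcb.le, fun x y hxy hax hyb hxc hcy => ?_⟩⟩
  have := @hmin (x, y) ⟨hxy, hxc, hcy⟩
  simp only at this
  omega

end Cell

open Classical in
/-- The edges `ab` of the dissection `t` with a vertex strictly between `a` and `b`. They index the
cells: every cell is the cell below exactly one of them. -/
noncomputable def longEdges {m : ℕ} (t : Finset (Sym2 (Fin (m + 2)))) :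
    Finset (Fin (m + 2) × Fin (m + 2)) :=
  {p | IsEdge t p.1 p.2 ∧ p.1.val + 1 < p.2.val}

section Count

variable {m : ℕ} {t : Finset (Sym2 (Fin (m + 2)))}

lemma mem_longEdges {p : Fin (m + 2) × Fin (m + 2)} :
    p ∈ longEdges t ↔ IsEdge t p.1 p.2 ∧ p.1.val + 1 < p.2.val := by
  simp [longEdges]

lemma mem_cell_sdiff_pair {a b c : Fin (m + 2)} :
    c ∈ cell t a b \ {a, b} ↔ c ∈ cell t a b ∧ a < c ∧ c < b := by
  simp only [mem_sdiff, mem_insert, mem_singleton]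
  refine and_congr_right fun hc => ?_
  have := mem_cell.1 hc
  omega

lemma biUnion_cell_sdiff_pair :
    (longEdges t).biUnion (fun p => cell t p.1 p.2 \ {p.1, p.2}) = Ioo 0 (Fin.last (m + 1)) := by
  ext c
  simp only [mem_biUnion, mem_cell_sdiff_pair, mem_Ioo]
  constructor
  · rintro ⟨p, -, -, hpc, hcp⟩
    exact ⟨(Fin.zero_le _).trans_lt hpc, hcp.trans_le (Fin.le_last _)⟩
  · rintro ⟨h₀, h₁⟩
    obtain ⟨a, b, hab, hac, hcb, hc⟩ := exists_isEdge_mem_cell_between (t := t) h₀ h₁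
    exact ⟨(a, b), mem_longEdges.2 ⟨hab, by simp only; omega⟩, hc, hac, hcb⟩

namespace IsDissection

lemma card_longEdges (ht : IsDissection t) (hm : 0 < m) : #(longEdges t) = #t + 1 := by
  have hout : s(0, Fin.last (m + 1)) ∉ t := fun h => (ht.val_of_mem Fin.last_pos h).2 ⟨rfl, rfl⟩
  rw [← card_insert_of_notMem hout]
  refine card_bij (fun p _ => s(p.1, p.2)) (fun p hp => ?_) (fun p hp p' hp' h => ?_)
    fun e he => ?_
  · obtain ⟨hE, hlong⟩ := mem_longEdges.1 hp
    obtain ⟨-, h | h | h⟩ := isEdge_iff.1 hE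
    · omega
    · rw [show p.1 = 0 from Fin.ext h.1, show p.2 = Fin.last (m + 1) from Fin.ext h.2]
      exact mem_insert_self _ _
    · exact mem_insert_of_mem h
  · exact Prod.ext_iff.2 <|
      (mk_eq_mk_iff_of_lt (mem_longEdges.1 hp).1.lt (mem_longEdges.1 hp').1.lt).1 h
  · rcases mem_insert.1 he with rfl | he
    · exact ⟨(0, Fin.last (m + 1)), mem_longEdges.2 ⟨isEdge_zero_last, by simpa using hm⟩, rfl⟩
    · obtain ⟨a, b, hab, rfl⟩ := ht.exists_lt_of_mem he
      exact ⟨(a, b), mem_longEdges.2 ⟨isEdge_of_mem hab he, (ht.val_of_mem hab he).1⟩, rfl⟩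

lemma sum_card_cell (ht : IsDissection t) :
    ∑ p ∈ longEdges t, (#(cell t p.1 p.2) - 2) = m := by
  have hcard : ∀ p ∈ longEdges t, #(cell t p.1 p.2) - 2 = #(cell t p.1 p.2 \ {p.1, p.2}) := by
    intro p hp
    have hlt := (mem_longEdges.1 hp).1.lt
    rw [card_sdiff_of_subset, card_pair hlt.ne]
    simp [insert_subset_iff, left_mem_cell hlt.le, right_mem_cell hlt.le]
  have hdisj : (longEdges t : Set (Fin (m + 2) × Fin (m + 2))).PairwiseDisjoint
      fun p => cell t p.1 p.2 \ {p.1, p.2} := by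
    intro p hp p' hp' hne
    refine disjoint_left.2 fun c hc hc' => hne (Prod.ext_iff.2 ?_)
    obtain ⟨hc, hpc, hcp⟩ := mem_cell_sdiff_pair.1 hc
    obtain ⟨hc', hpc', hcp'⟩ := mem_cell_sdiff_pair.1 hc'
    exact ht.eq_of_mem_cell (mem_longEdges.1 hp).1 (mem_longEdges.1 hp').1 hc hc' hpc hcp hpc' hcp'
  rw [sum_congr rfl hcard, ← card_biUnion hdisj, biUnion_cell_sdiff_pair, Fin.card_Ioo]
  simp

end IsDissection

end Count

/-- Every diagonal `ab` of `t` with `a < b` satisfies `b ≡ a + 1` modulo `q`, that is, it cuts off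
a polygon whose number of vertices is `2` modulo `q`. -/
def IsAdmissible {m : ℕ} (q : ℕ) (t : Finset (Sym2 (Fin (m + 2)))) : Prop :=
  ∀ a b, a < b → s(a, b) ∈ t → (b.val : ZMod q) = a.val + 1

section Admissible

variable {m q : ℕ} {t t' : Finset (Sym2 (Fin (m + 2)))} {a b : Fin (m + 2)}

lemma IsAdmissible.mono (h : IsAdmissible q t) (hsub : t' ⊆ t) : IsAdmissible q t' :=
  fun a b hab hmem => h a b hab (hsub hmem)

lemma IsAdmissible.insert_mk (h : IsAdmissible q t) (hab : a < b)
    (hb : (b.val : ZMod q) = a.val + 1) : IsAdmissible q (insert s(a, b) t) := by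
  intro x y hxy hmem
  rcases mem_insert.1 hmem with heq | hmem
  · obtain ⟨rfl, rfl⟩ := (mk_eq_mk_iff_of_lt hxy hab).1 heq
    exact hb
  · exact h x y hxy hmem

lemma IsDissection.isAdmissible_of_card_cell (ht : IsDissection t)
    (h : ∀ p ∈ longEdges t, #(cell t p.1 p.2) = q + 2) : IsAdmissible q t := by
  have hedge : ∀ N a b, b.val - a.val = N → IsEdge t a b → (b.val : ZMod q) = a.val + 1 := by
    intro N
    induction N using Nat.strong_induction_on with
    | _ N ih =>
      intro a b hN hab
      have hlt := hab.lt
      by_cases hlong : b.val = a.val + 1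
      · rw [hlong, Nat.cast_succ]
      replace hlong : a.val + 1 < b.val := by omega
      have hstep : ∀ x ∈ cell t a b, ∀ y ∈ cell t a b, x < y →
          (∀ z ∈ cell t a b, ¬ (x < z ∧ z < y)) → (y.val : ZMod q) = x.val + 1 := by
        intro x hx y hy hxy hcons
        have hE := ht.isEdge_of_consecutive_mem_cell hlong hx hy hxy hcons
        obtain ⟨c, hc, hac, hcb⟩ := ht.exists_mem_cell_between hlong
        have hc' := hcons c hc
        have hx' := mem_cell.1 hx
        have hy' := mem_cell.1 hy
        exact ih _ (by omega) x y rfl hE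
      have hcount := apply_greatest_add_one hstep (isLeast_cell hlt.le) (isGreatest_cell hlt.le)
      rw [h (a, b) (mem_longEdges.2 ⟨hab, hlong⟩), Nat.cast_add, ZMod.natCast_self,
        Nat.cast_ofNat] at hcount
      linear_combination hcount
  exact fun a b hab hmem => hedge _ a b rfl (isEdge_of_mem hab hmem)

variable {n : ℕ} {t : Finset (Sym2 (Fin (q * n + 2)))} {a b : Fin (q * n + 2)}

namespace IsAdmissible

lemma natCast_of_isEdge (h : IsAdmissible q t) (hab : IsEdge t a b) :
    (b.val : ZMod q) = a.val + 1 := by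
  obtain ⟨hlt, hb | ⟨ha, hb⟩ | hmem⟩ := isEdge_iff.1 hab
  · rw [hb, Nat.cast_succ]
  · simp [ha, hb]
  · exact h a b hlt hmem

lemma natCast_of_consecutive_mem_cell (h : IsAdmissible q t) (ht : IsDissection t)
    (hab : a.val + 1 < b.val) : ∀ x ∈ cell t a b, ∀ y ∈ cell t a b, x < y →
      (∀ z ∈ cell t a b, ¬ (x < z ∧ z < y)) → (y.val : ZMod q) = x.val + 1 :=
  fun _ hx _ hy hxy hcons =>
    h.natCast_of_isEdge (ht.isEdge_of_consecutive_mem_cell hab hx hy hxy hcons)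

lemma natCast_card_cell (h : IsAdmissible q t) (ht : IsDissection t) (hE : IsEdge t a b)
    (hab : a.val + 1 < b.val) : (#(cell t a b) : ZMod q) = 2 := by
  have hcount := apply_greatest_add_one (h.natCast_of_consecutive_mem_cell ht hab)
    (isLeast_cell hE.lt.le) (isGreatest_cell hE.lt.le)
  rw [h.natCast_of_isEdge hE] at hcount
  linear_combination -hcount

lemma le_card_cell_sub_two (h : IsAdmissible q t) (ht : IsDissection t) (hE : IsEdge t a b)
    (hab : a.val + 1 < b.val) : q ≤ #(cell t a b) - 2 := by
  have h2 := ht.two_lt_card_cell hab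
  refine Nat.le_of_dvd (by omega) ((ZMod.natCast_eq_zero_iff _ _).1 ?_)
  rw [Nat.cast_sub h2.le, h.natCast_card_cell ht hE hab, Nat.cast_ofNat, sub_self]

lemma card_cell (h : IsAdmissible q t) (ht : IsDissection t) (hq : 0 < q) (hn : 0 < n)
    (hcard : #t = n - 1) : ∀ p ∈ longEdges t, #(cell t p.1 p.2) = q + 2 := by
  have hle : ∀ p ∈ longEdges t, q ≤ #(cell t p.1 p.2) - 2 := fun p hp =>
    h.le_card_cell_sub_two ht (mem_longEdges.1 hp).1 (mem_longEdges.1 hp).2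
  have hsum : ∑ _p ∈ longEdges t, q = ∑ p ∈ longEdges t, (#(cell t p.1 p.2) - 2) := by
    rw [ht.sum_card_cell, sum_const, smul_eq_mul, ht.card_longEdges (Nat.mul_pos hq hn), hcard,
      Nat.sub_add_cancel hn, mul_comm]
  intro p hp
  have := (sum_eq_sum_iff_of_le hle).1 hsum p hp
  omega

lemma exists_mem_cell_natCast_eq_one [NeZero q] (h : IsAdmissible q t) (ht : IsDissection t)
    (hab : a.val + 1 < b.val) (hcard : #(cell t a b) = q + 2) :
    ∃ c ∈ cell t a b, a < c ∧ c < b ∧ (c.val : ZMod q) = 1 := by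
  have hlt : (-(a.val : ZMod q)).val < q := ZMod.val_lt _
  obtain ⟨c, hc, hac, hcb, hval⟩ := exists_between_apply_eq
    (h.natCast_of_consecutive_mem_cell ht hab) (isLeast_cell (by omega))
    (isGreatest_cell (by omega)) (Nat.succ_pos (-(a.val : ZMod q)).val) (by omega)
  refine ⟨c, hc, hac, hcb, ?_⟩
  rw [hval, Nat.cast_succ, ZMod.natCast_zmod_val, add_neg_cancel_left]

end IsAdmissible

lemma isKAngulation_iff {k : ℕ} {t : Finset (Sym2 (Fin ((k - 2) * n + 2)))} (hk : 3 ≤ k)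
    (hn : 1 ≤ n) :
    IsKAngulation k n t ↔ IsDissection t ∧ IsAdmissible (k - 2) t ∧ #t = n - 1 := by
  have hk2 : k - 2 + 2 = k := by omega
  constructor
  · rintro ⟨hdiag, hcross, hcard, hface⟩
    have ht : IsDissection t := ⟨hdiag, hcross⟩
    refine ⟨ht, ht.isAdmissible_of_card_cell fun p hp => ?_, hcard⟩
    obtain ⟨hE, hlong⟩ := mem_longEdges.1 hp
    rw [hk2]
    exact hface _ (ht.isFaceSet_cell hE hlong)
  · rintro ⟨ht, hadm, hcard⟩
    refine ⟨ht.isDiagonal, ht.not_crosses, hcard, fun F hF => ?_⟩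
    obtain ⟨a, b, hE, hlong, rfl⟩ := ht.isFaceSet_iff.1 hF
    rw [hadm.card_cell ht (by omega) hn hcard (a, b) (mem_longEdges.2 ⟨hE, hlong⟩), hk2]

end Admissible

section Flip

variable {m q n : ℕ}

/-- `ab` is a diagonal of `t` missing the vertex `0`, and no longer diagonal of `t` misses `0`;
the length of `ab` is `b - a`. -/
def IsLongestAvoidingZero {m : ℕ} (t : Finset (Sym2 (Fin (m + 2)))) (a b : Fin (m + 2)) : Prop :=
  (0 < a ∧ a < b ∧ s(a, b) ∈ t) ∧
    ∀ x y, 0 < x → x < y → s(x, y) ∈ t → y.val - x.val ≤ b.val - a.val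

variable {t : Finset (Sym2 (Fin (m + 2)))} {a b c : Fin (m + 2)}

lemma zero_mem_mk_iff_of_lt (hab : a < b) : 0 ∈ s(a, b) ↔ a = 0 := by
  rw [Sym2.mem_iff, eq_comm, or_iff_left ((Fin.zero_le a).trans_lt hab).ne]

namespace IsDissection

lemma exists_isLongestAvoidingZero (ht : IsDissection t) (h : ∃ e ∈ t, 0 ∉ e) :
    ∃ a b, IsLongestAvoidingZero t a b := by
  obtain ⟨e, he, h0⟩ := h
  obtain ⟨a₀, b₀, hlt, rfl⟩ := ht.exists_lt_of_mem he
  rw [zero_mem_mk_iff_of_lt hlt] at h0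
  obtain ⟨⟨a, b⟩, hab, hmax⟩ :=
    (Set.toFinite {p : Fin (m + 2) × Fin (m + 2) | 0 < p.1 ∧ p.1 < p.2 ∧ s(p.1, p.2) ∈ t}
      ).exists_maximalFor (fun p => p.2.val - p.1.val) _ ⟨(a₀, b₀), Fin.pos_of_ne_zero h0, hlt, he⟩
  refine ⟨a, b, hab, fun x y hx hxy hmem => ?_⟩
  have := @hmax (x, y) ⟨hx, hxy, hmem⟩
  simp only at this
  omega

lemma mk_zero_notMem (ht : IsDissection t) (h : IsLongestAvoidingZero t a b) (hac : a < c)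
    (hcb : c < b) : s(0, c) ∉ t := fun hmem =>
  ht.not_interleaved (isEdge_of_mem (h.1.1.trans hac) hmem) (isEdge_of_mem h.1.2.1 h.1.2.2)
    ⟨h.1.1, hac, hcb⟩

lemma flip (ht : IsDissection t) (h : IsLongestAvoidingZero t a b) (hc : c ∈ cell t a b)
    (hac : a < c) (hcb : c < b) : IsDissection (insert s(0, c) (t.erase s(a, b))) := by
  obtain ⟨⟨ha, hab, habt⟩, hmax⟩ := h
  have h0c : 0 < c := ha.trans hac
  refine (ht.mono (erase_subset _ _)).insert_mk h0c ?_ fun x y hxy hmem hcross => ?_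
  · rw [isDiagonal_mk_iff_of_lt h0c]
    have : a.val ≠ 0 := Fin.val_ne_zero_iff.2 ha.ne'
    have : (0 : Fin (m + 2)).val = 0 := rfl
    omega
  · obtain ⟨hne, hmem⟩ := mem_erase.1 hmem
    rw [Ne, mk_eq_mk_iff_of_lt hxy hab] at hne
    obtain ⟨hx, hxc, hcy⟩ : 0 < x ∧ x < c ∧ c < y :=
      ((crosses_mk_iff_of_lt h0c hxy).1 hcross).resolve_right fun h => Fin.not_lt_zero _ h.1
    have hE := isEdge_of_mem hxy hmem
    have hin : ¬ (a ≤ x ∧ y ≤ b) := fun h => hne ((mem_cell.1 hc).2.2 x y hE h.1 h.2 hxc hcy)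
    have hcross₁ := ht.not_interleaved hE (isEdge_of_mem hab habt)
    have hcross₂ := ht.not_interleaved (isEdge_of_mem hab habt) hE
    have hlen := hmax x y hx hxy hmem
    omega

end IsDissection

lemma filter_zero_notMem_flip_ssubset (h : IsLongestAvoidingZero t a b) :
    {e ∈ insert s(0, c) (t.erase s(a, b)) | 0 ∉ e} ⊂ {e ∈ t | 0 ∉ e} := by
  obtain ⟨⟨ha, hab, habt⟩, -⟩ := h
  rw [filter_insert, if_neg (not_not.2 (Sym2.mem_mk_left 0 c)), filter_erase]
  exact erase_ssubset (mem_filter.2 ⟨habt, by rw [zero_mem_mk_iff_of_lt hab]; exact ha.ne'⟩)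

lemma exists_flip [NeZero q] {t : Finset (Sym2 (Fin (q * n + 2)))} (hn : 0 < n)
    (ht : IsDissection t) (hadm : IsAdmissible q t) (hcard : #t = n - 1) (h : ∃ e ∈ t, 0 ∉ e) :
    ∃ t', (IsDissection t' ∧ IsAdmissible q t' ∧ #t' = n - 1) ∧
      (#(t \ t') = 1 ∧ #(t' \ t) = 1) ∧ #{e ∈ t' | 0 ∉ e} < #{e ∈ t | 0 ∉ e} := by
  obtain ⟨a, b, hlongest⟩ := ht.exists_isLongestAvoidingZero h
  have ⟨⟨ha, hab, habt⟩, _⟩ := hlongest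
  have hlong := (ht.val_of_mem hab habt).1
  obtain ⟨c, hc, hac, hcb, hc1⟩ := hadm.exists_mem_cell_natCast_eq_one ht hlong <|
    hadm.card_cell ht (NeZero.pos q) hn hcard (a, b)
      (mem_longEdges.2 ⟨isEdge_of_mem hab habt, hlong⟩)
  have hnotMem := ht.mk_zero_notMem hlongest hac hcb
  refine ⟨insert s(0, c) (t.erase s(a, b)), ⟨ht.flip hlongest hc hac hcb, ?_, ?_⟩,
    ⟨card_sdiff_insert_erase habt hnotMem, card_insert_erase_sdiff hnotMem⟩,
    card_lt_card (filter_zero_notMem_flip_ssubset hlongest)⟩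
  · exact (hadm.mono (erase_subset _ _)).insert_mk (ha.trans hac) (by simp [hc1])
  · rw [card_insert_of_notMem fun h => hnotMem (mem_of_mem_erase h), card_erase_add_one habt, hcard]

end Flip

/-- The fan: the `(q + 2)`-angulation of the convex `(q * n + 2)`-gon all of whose diagonals
contain the vertex `0`. -/
def fan (q n : ℕ) : Finset (Sym2 (Fin (q * n + 2))) :=
  (Ioo 0 n).image fun j => s(0, Fin.ofNat (q * n + 2) (q * j + 1))

section Fan

variable {q n : ℕ}

lemma val_ofNat_mul_add_one {j : ℕ} (hj : j < n) :
    (Fin.ofNat (q * n + 2) (q * j + 1)).val = q * j + 1 := by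
  have := Nat.mul_le_mul_left q hj.le
  rw [Fin.val_ofNat, Nat.mod_eq_of_lt (by omega)]

lemma mk_zero_mem_fan_iff {c : Fin (q * n + 2)} :
    s(0, c) ∈ fan q n ↔ ∃ j, 0 < j ∧ j < n ∧ c.val = q * j + 1 := by
  simp only [fan, mem_image, mem_Ioo, and_assoc, Sym2.congr_right]
  refine exists_congr fun j => and_congr_right fun _ => and_congr_right fun hj => ?_
  rw [Fin.ext_iff, val_ofNat_mul_add_one hj, eq_comm]

lemma exists_eq_mk_zero_of_mem_fan {e : Sym2 (Fin (q * n + 2))} (he : e ∈ fan q n) :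
    ∃ c, e = s(0, c) := by
  obtain ⟨j, -, rfl⟩ := mem_image.1 he
  exact ⟨_, rfl⟩

lemma exists_of_mk_mem_fan {a b : Fin (q * n + 2)} (hab : a < b) (h : s(a, b) ∈ fan q n) :
    a = 0 ∧ ∃ j, 0 < j ∧ j < n ∧ b.val = q * j + 1 := by
  obtain ⟨c, hc⟩ := exists_eq_mk_zero_of_mem_fan h
  obtain rfl : a = 0 := (zero_mem_mk_iff_of_lt hab).1 (hc ▸ Sym2.mem_mk_left 0 c)
  exact ⟨rfl, mk_zero_mem_fan_iff.1 h⟩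

lemma card_fan [NeZero q] : #(fan q n) = n - 1 := by
  rw [fan, card_image_of_injOn, Nat.card_Ioo, Nat.sub_zero]
  intro i hi j hj hij
  rw [coe_Ioo, Set.mem_Ioo] at hi hj
  have hval := congrArg Fin.val (Sym2.congr_right.1 hij)
  rw [val_ofNat_mul_add_one hi.2, val_ofNat_mul_add_one hj.2] at hval
  exact Nat.eq_of_mul_eq_mul_left (NeZero.pos q) (Nat.succ_injective hval)

lemma isDissection_fan [NeZero q] : IsDissection (fan q n) := by
  have hlt : ∀ e ∈ fan q n, ∃ c, 0 < c ∧ e = s(0, c) := by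
    intro e he
    obtain ⟨c, rfl⟩ := exists_eq_mk_zero_of_mem_fan he
    obtain ⟨j, -, -, hc⟩ := mk_zero_mem_fan_iff.1 he
    exact ⟨c, Fin.pos_of_ne_zero fun h => by simp [h] at hc, rfl⟩
  refine ⟨fun e he => ?_, fun e he f hf => ?_⟩
  · obtain ⟨c, h0, rfl⟩ := hlt e he
    obtain ⟨j, hj, hjn, hc⟩ := mk_zero_mem_fan_iff.1 he
    have := Nat.mul_pos (NeZero.pos q) hj
    have := Nat.mul_lt_mul_of_pos_left hjn (NeZero.pos q)
    rw [isDiagonal_mk_iff_of_lt h0, Fin.val_zero]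
    omega
  · obtain ⟨c, h0c, rfl⟩ := hlt e he
    obtain ⟨d, h0d, rfl⟩ := hlt f hf
    simp [crosses_mk_iff_of_lt h0c h0d]

lemma isAdmissible_fan : IsAdmissible q (fan q n) := by
  intro a b hab hmem
  obtain ⟨rfl, j, -, -, hb⟩ := exists_of_mk_mem_fan hab hmem
  simp [hb]

lemma eq_fan [NeZero q] {t : Finset (Sym2 (Fin (q * n + 2)))} (ht : IsDissection t)
    (hadm : IsAdmissible q t) (hcard : #t = n - 1) (h0 : ∀ e ∈ t, 0 ∈ e) : t = fan q n := by
  refine eq_of_subset_of_card_le (fun e he => ?_) (by rw [card_fan, hcard])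
  obtain ⟨a, b, hab, rfl⟩ := ht.exists_lt_of_mem he
  obtain rfl := (zero_mem_mk_iff_of_lt hab).1 (h0 _ he)
  obtain ⟨hb, hbn⟩ := ht.val_of_mem hab he
  rw [Fin.val_zero] at hb hbn
  obtain ⟨j, hj⟩ : q ∣ b.val - 1 := by
    rw [← ZMod.natCast_eq_zero_iff, Nat.cast_sub (by omega), hadm 0 b hab he]
    simp
  refine mk_zero_mem_fan_iff.2 ⟨j, Nat.pos_of_ne_zero ?_, ?_, by omega⟩
  · rintro rfl
    omega
  · exact lt_of_mul_lt_mul_left (by omega : q * j < q * n) (Nat.zero_le q)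

end Fan

/-- for every `k ≥ 3` and `n ≥ 1`, the `k`-angulation flip graph
`K_{k,(k-2)n+2}` on the `k`-angulations of the convex `((k-2)n+2)`-gon is connected. -/
theorem kAngGraph_connected (k n : ℕ) (hk : 3 ≤ k) (hn : 1 ≤ n) :
    (kAngGraph k n).Connected := by
  have : NeZero (k - 2) := ⟨by omega⟩
  have hfan : IsKAngulation k n (fan (k - 2) n) :=
    (isKAngulation_iff hk hn).2 ⟨isDissection_fan, isAdmissible_fan, card_fan⟩
  refine connected_of_exists_adj_lt ⟨fan (k - 2) n, hfan⟩ (fun t => #{e ∈ t.val | 0 ∉ e}) ?_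
  rintro ⟨t, hkt⟩ hne
  obtain ⟨ht, hadm, hcard⟩ := (isKAngulation_iff hk hn).1 hkt
  have hmiss : ∃ e ∈ t, 0 ∉ e := by
    by_contra! h
    exact hne (Subtype.ext (eq_fan ht hadm hcard h))
  obtain ⟨t', hkt', hadj, hlt⟩ := exists_flip hn ht hadm hcard hmiss
  exact ⟨⟨t', (isKAngulation_iff hk hn).2 hkt'⟩, hadj, hlt⟩
end
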